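/- arXiv:1706.09675 — 2 statements merged into one kernel-verified Lean document; each statement's English description precedes it below -/
import Mathlib

section
/- Let R = k[x_1,…,x_n] be a polynomial ring over a field k, let I ⊆ R be a monomial ideal, and let f ∈ R be any monomial. Then reg R/I ≥ reg R/(I:f). -/
open MvPolynomial

/-- The depth of the `R`-module `M` with respect to the ideal `J`: the supremum of
lengths of `M`-regular sequences consisting of elements of `J`. -/
noncomputable def idealDepth {R : Type*} [CommRing R] (J : Ideal R)
    (M : Type*) [AddCommGroup M] [Module R M] : ℕ :=
  sSup {d : ℕ | ∃ rs : List R, rs.length = d ∧ (∀ r ∈ rs, r ∈ J) ∧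
    RingTheory.Sequence.IsRegular M rs}

/-- The irrelevant maximal homogeneous ideal `(x₁, …, xₙ)` of the polynomial ring. -/
noncomputable def mxIdeal (k : Type*) [Field k] (n : ℕ) : Ideal (MvPolynomial (Fin n) k) :=
  Ideal.span (Set.range MvPolynomial.X)

/-- `depth R/I`, the depth of the quotient module with respect to the maximal
homogeneous ideal. -/
noncomputable def pdepth {k : Type*} [Field k] {n : ℕ}
    (I : Ideal (MvPolynomial (Fin n) k)) : ℕ :=
  idealDepth (mxIdeal k n) (MvPolynomial (Fin n) k ⧸ I)

/-- `p` is homogeneous of degree `d ∈ ℤ` (where `0` is homogeneous of any degree). -/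
def HomogOfDeg {k : Type*} [Field k] {n : ℕ} (p : MvPolynomial (Fin n) k) (d : ℤ) : Prop :=
  p = 0 ∨ ∃ m : ℕ, (m : ℤ) = d ∧ p.IsHomogeneous m

/-- A finite graded free resolution of `R/I`: free modules `Fᵢ = ⊕_j R(-D i j)` (of rank
`b i`, zero for `i > len`), differentials given by matrices `A i : Fᵢ₊₁ → Fᵢ` whose entries
are homogeneous of the appropriate degrees, and an augmentation `F₀ → R/I` given by the
homogeneous column `v`, the whole complex being exact. -/
structure GradedFreeRes {k : Type*} [Field k] {n : ℕ}
    (I : Ideal (MvPolynomial (Fin n) k)) where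
  len : ℕ
  b : ℕ → ℕ
  hb : ∀ i : ℕ, len < i → b i = 0
  D : (i : ℕ) → Fin (b i) → ℤ
  A : (i : ℕ) → Matrix (Fin (b i)) (Fin (b (i+1))) (MvPolynomial (Fin n) k)
  v : Fin (b 0) → MvPolynomial (Fin n) k
  hv : ∀ r, HomogOfDeg (v r) (D 0 r)
  hA : ∀ (i : ℕ) r c, HomogOfDeg (A i r c) (D (i+1) c - D i r)
  haug : Function.Surjective
    (fun w : Fin (b 0) → MvPolynomial (Fin n) k => Ideal.Quotient.mk I (∑ r, w r * v r))
  hex0 : Function.Exact ((A 0).mulVec)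
    (fun w : Fin (b 0) → MvPolynomial (Fin n) k => Ideal.Quotient.mk I (∑ r, w r * v r))
  hex : ∀ i : ℕ, Function.Exact ((A (i+1)).mulVec) ((A i).mulVec)

/-- The Castelnuovo–Mumford regularity `reg R/I`: the least `r` such that some finite
graded free resolution of `R/I` has all its `i`-th twists `≤ r + i`; equivalently (via the
minimal free resolution) `reg R/I = max { j - i : β_{i,j}(R/I) ≠ 0 }`. -/
noncomputable def regQuot {k : Type*} [Field k] {n : ℕ}
    (I : Ideal (MvPolynomial (Fin n) k)) : ℤ :=
  sInf {r : ℤ | ∃ F : GradedFreeRes I, ∀ (i : ℕ) (j : Fin (F.b i)), F.D i j - (i : ℤ) ≤ r}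

/-- The regularity of a (nonzero) homogeneous ideal: `reg I = reg R/I + 1`. -/
noncomputable def regIdeal {k : Type*} [Field k] {n : ℕ}
    (I : Ideal (MvPolynomial (Fin n) k)) : ℤ :=
  regQuot I + 1

/-- An ideal is homogeneous if it is generated by homogeneous polynomials. -/
def IsHomogeneousIdeal {k : Type*} [Field k] {n : ℕ}
    (I : Ideal (MvPolynomial (Fin n) k)) : Prop :=
  ∃ T : Set (MvPolynomial (Fin n) k), (∀ p ∈ T, ∃ d : ℕ, p.IsHomogeneous d) ∧ I = Ideal.span T

/-- A monomial ideal: an ideal generated by monomials. -/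
def IsMonomialIdeal {k : Type*} [Field k] {n : ℕ}
    (I : Ideal (MvPolynomial (Fin n) k)) : Prop :=
  ∃ T : Set (Fin n →₀ ℕ), I = Ideal.span ((fun m => monomial m (1 : k)) '' T)



/-- Scalar data of a multigraded resolution. -/
structure Frame (k : Type*) [Field k] {n : ℕ} (U : Set (Fin n →₀ ℕ)) where
  J : Type
  fin : Fintype J
  hd : J → ℕ
  md : J → (Fin n →₀ ℕ)
  l : J → J → k
  o : J
  hd_o : ∀ j, hd j = 0 ↔ j = o
  md_o : md o = 0
  l_hd : ∀ p q, l p q ≠ 0 → hd q = hd p + 1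
  l_md : ∀ p q, l p q ≠ 0 → md p ≤ md q
  ll : ∀ p q, ∑ j, l p j * l j q = 0
  l_o : ∀ q, l o q ≠ 0 → md q ∈ U
  ex : ∀ (b : Fin n →₀ ℕ) (w : J → k), (∀ j, w j ≠ 0 → md j ≤ b) →
    (∀ p, ∑ j, l p j * w j = 0) → (b ∈ U ∨ w o = 0) →
    ∃ u : J → k, (∀ j, u j ≠ 0 → md j ≤ b) ∧ ∀ p, ∑ j, l p j * u j = w p

attribute [instance] Frame.fin

namespace Frame

variable {k : Type*} [Field k] {n : ℕ} {U : Set (Fin n →₀ ℕ)}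

/-- The frame of the zero ideal. -/
def zeroFrame : Frame k (∅ : Set (Fin n →₀ ℕ)) where
  J := Unit
  fin := inferInstance
  hd := fun _ => 0
  md := fun _ => 0
  l := fun _ _ => 0
  o := ()
  hd_o := by simp
  md_o := rfl
  l_hd := by simp
  l_md := by simp
  ll := by simp
  l_o := by simp
  ex := by
    intro b w _ _ h
    refine ⟨0, by simp, ?_⟩
    rintro ⟨⟩
    simpa using (h.resolve_left (by simp)).symm

open Classical in
/-- The mapping cone, adding one generator. -/
noncomputable def addGen (F : Frame k U) (g : Fin n →₀ ℕ) : Frame k (U ∪ {b | g ≤ b}) where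
  J := F.J ⊕ F.J
  fin := inferInstance
  hd := Sum.elim F.hd (fun j => F.hd j + 1)
  md := Sum.elim F.md (fun j => F.md j ⊔ g)
  l := fun p q => match p, q with
    | .inl p, .inl q => F.l p q
    | .inl p, .inr q => if p = q then 1 else 0
    | .inr _, .inl _ => 0
    | .inr p, .inr q => - F.l p q
  o := .inl F.o
  hd_o := by
    rintro (j | j)
    · simp [F.hd_o]
    · simp
  md_o := by simp [F.md_o]
  l_hd := by
    rintro (p | p) (q | q) h
    · exact F.l_hd p q h
    · have : p = q := by by_contra h'; simp [h'] at h
      simp [this]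
    · simp at h
    · simp at h
      simp [F.l_hd p q h]
  l_md := by
    rintro (p | p) (q | q) h
    · exact F.l_md p q h
    · have : p = q := by by_contra h'; simp [h'] at h
      simp [this]
    · simp at h
    · simp at h
      simpa using (F.l_md p q h).trans le_sup_left
  ll := by
    rintro (p | p) (q | q) <;> simp [F.ll]
  l_o := by
    rintro (q | q) h
    · exact Or.inl (F.l_o q h)
    · right
      simp
  ex := by
    intro b w hw hl h
    by_cases hg : g ≤ b
    · refine ⟨Sum.elim (fun _ => 0) (fun j => w (.inl j)), ?_, ?_⟩
      · rintro (j | j) hj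
        · simp at hj
        · simpa using ⟨hw (.inl j) hj, hg⟩
      · rintro (p | p)
        · simp
        · have := hl (.inl p)
          simp at this ⊢
          exact neg_eq_of_add_eq_zero_right this
    · have hw2 : ∀ j, w (.inr j) = 0 := by
        intro j
        by_contra hj
        have := hw _ hj
        simp at this
        exact hg this.2
      obtain ⟨u, hu, hu'⟩ := F.ex b (fun j => w (.inl j)) (fun j hj => hw (.inl j) hj)
        (fun p => by simpa [hw2] using hl (.inl p))
        (by
          rcases h with (h | h) | h
          · exact Or.inl h
          · exact absurd h hg
          · exact Or.inr h)
      refine ⟨Sum.elim u (fun _ => 0), ?_, ?_⟩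
      · rintro (j | j) hj
        · exact hu j hj
        · simp at hj
      · rintro (p | p)
        · simp [hu']
        · simp [hw2]

theorem exists_frame (G : Finset (Fin n →₀ ℕ)) :
    Nonempty (Frame k {b | ∃ g ∈ G, g ≤ b}) := by
  classical
  induction G using Finset.induction_on with
  | empty => simpa using ⟨zeroFrame (k := k) (n := n)⟩
  | insert g G _ ih =>
    obtain ⟨F⟩ := ih
    have e : {b | ∃ g' ∈ insert g G, g' ≤ b} = {b | ∃ g ∈ G, g ≤ b} ∪ {b | g ≤ b} := by
      ext b
      simp [or_comm]
    rw [e]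
    exact ⟨F.addGen g⟩

/-- The frame of a colon ideal. -/
noncomputable def colon (F : Frame k U) (hU : IsUpperSet U) (m : Fin n →₀ ℕ) :
    Frame k {b | b + m ∈ U} where
  J := F.J
  fin := inferInstance
  hd := F.hd
  md := fun j => F.md j - m
  l := F.l
  o := F.o
  hd_o := F.hd_o
  md_o := by simp [F.md_o]
  l_hd := F.l_hd
  l_md := fun p q h => tsub_le_tsub_right (F.l_md p q h) m
  ll := F.ll
  l_o := fun q h => hU le_tsub_add (F.l_o q h)
  ex := by
    intro b w hw hl h
    obtain ⟨u, hu, hu'⟩ := F.ex (b + m) w (fun j hj => tsub_le_iff_right.1 (hw j hj)) hl h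
    exact ⟨u, fun j hj => tsub_le_iff_right.2 (hu j hj), hu'⟩

open Classical in
theorem sum_sub {J : Type} [Fintype J] (p q : J) (hpq : p ≠ q) (g : J → k) :
    ∑ j : {j // j ≠ p ∧ j ≠ q}, g j = (∑ j, g j) - g p - g q := by
  have h1 : ∑ j : {j // j ≠ p ∧ j ≠ q}, g j = ∑ j, if j ≠ p ∧ j ≠ q then g j else 0 := by
    rw [← Finset.sum_filter]
    exact (Finset.sum_subtype _ (by simp) _).symm
  have h2 : ∀ j, (if j ≠ p ∧ j ≠ q then g j else 0) =
      g j - (if j = p then g p else 0) - (if j = q then g q else 0) := by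
    intro j
    by_cases h : j = p
    · subst h; simp [hpq]
    · by_cases h' : j = q
      · subst h'; simp [h]
      · simp [h, h']
  rw [h1]
  simp_rw [h2]
  simp [Finset.sum_sub_distrib]

open Classical in
/-- Gaussian elimination. -/
noncomputable def elim (F : Frame k U) (hU : IsUpperSet U) (h0 : 0 ∉ U) (p q : F.J)
    (hl : F.l p q ≠ 0) (hm : F.md p = F.md q) : Frame k U :=
  have hpo : F.o ≠ p := fun h => h0 (by
    subst h
    have := F.l_o q hl
    rwa [← hm, F.md_o] at this)
  have hqo : F.o ≠ q := fun h => by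
    have := F.l_hd p q hl
    rw [(F.hd_o q).2 h.symm] at this
    omega
  have hpq : p ≠ q := fun h => by
    have := F.l_hd p q hl
    rw [h] at this
    omega
  have hself : ∀ j, F.l j j = 0 := fun j => by
    by_contra h
    have := F.l_hd j j h
    omega
  have key : ∀ i j, F.l i j - F.l i q * F.l p j / F.l p q ≠ 0 →
      F.l i j ≠ 0 ∨ (F.l i q ≠ 0 ∧ F.l p j ≠ 0) := by
    intro i j h
    by_contra! hc
    apply h
    by_cases h1 : F.l i q = 0
    · simp [h1, hc.1]
    · simp [hc.1, hc.2 h1]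
  { J := {j // j ≠ p ∧ j ≠ q}
    fin := inferInstance
    hd := fun j => F.hd j
    md := fun j => F.md j
    l := fun i j => F.l i j - F.l i q * F.l p j / F.l p q
    o := ⟨F.o, hpo, hqo⟩
    hd_o := fun j => by simp [F.hd_o, Subtype.ext_iff]
    md_o := F.md_o
    l_hd := fun i j h => by
      rcases key i j h with h | ⟨h1, h2⟩
      · exact F.l_hd _ _ h
      · have := F.l_hd _ _ h1
        have := F.l_hd _ _ h2
        have := F.l_hd _ _ hl
        omega
    l_md := fun i j h => by
      rcases key i j h with h | ⟨h1, h2⟩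
      · exact F.l_md _ _ h
      · exact (F.l_md _ _ h1).trans (hm ▸ F.l_md _ _ h2)
    ll := fun i m => by
      rw [sum_sub p q hpq
        (fun j => (F.l i j - F.l i q * F.l p j / F.l p q) * (F.l j m - F.l j q * F.l p m / F.l p q))]
      have e : ∀ j, (F.l i j - F.l i q * F.l p j / F.l p q) *
          (F.l j m - F.l j q * F.l p m / F.l p q) =
          F.l i j * F.l j m - (F.l p m / F.l p q) * (F.l i j * F.l j q)
          - (F.l i q / F.l p q) * (F.l p j * F.l j m)
          + (F.l i q / F.l p q) * (F.l p m / F.l p q) * (F.l p j * F.l j q) := by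
        intro j; ring
      simp_rw [e]
      simp only [Finset.sum_add_distrib, Finset.sum_sub_distrib, ← Finset.mul_sum, F.ll, hself]
      field_simp
      ring
    l_o := fun j h => by
      rcases key _ j h with h | ⟨h1, h2⟩
      · exact F.l_o _ h
      · exact hU (hm ▸ F.l_md _ _ h2) (F.l_o _ h1)
    ex := by
      intro b w hw hlw hbo
      set W : F.J → k := fun j => if h : j ≠ p ∧ j ≠ q then w ⟨j, h⟩ else 0 with hW
      have hWs : ∀ j : {j // j ≠ p ∧ j ≠ q}, W j = w j := fun j => by simp [hW, j.2]
      have hWp : W p = 0 := by simp [hW]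
      have hWq : W q = 0 := by simp [hW]
      have hWb : ∀ j, W j ≠ 0 → F.md j ≤ b := by
        intro j hj
        by_cases h : j ≠ p ∧ j ≠ q
        · exact hw ⟨j, h⟩ (by rwa [← hWs])
        · exact absurd (by simp only [hW]; rw [dif_neg h]) hj
      set c : k := (∑ j, F.l p j * W j) / F.l p q with hc
      have hcb : c ≠ 0 → F.md q ≤ b := by
        intro h
        have : ∑ j, F.l p j * W j ≠ 0 := fun h' => h (by simp [hc, h'])
        obtain ⟨j, -, hj⟩ := Finset.exists_ne_zero_of_sum_ne_zero this
        rw [← hm]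
        exact (F.l_md p j (left_ne_zero_of_mul hj)).trans (hWb j (right_ne_zero_of_mul hj))
      set W' : F.J → k := fun j => W j - if j = q then c else 0 with hW'
      have sumW' : ∀ i, ∑ j, F.l i j * W' j = ∑ j, F.l i j * W j - F.l i q * c := by
        intro i
        simp [hW', mul_sub, Finset.sum_sub_distrib]
      have z1 : ∀ i, i ≠ q → ∑ j, F.l i j * W' j = 0 := by
        intro i hi
        rw [sumW']
        by_cases hip : i = p
        · subst hip
          rw [hc]; field_simp; ring
        · have := hlw ⟨i, hip, hi⟩
          simp_rw [← hWs] at this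
          rw [sum_sub p q hpq (fun j => (F.l i j - F.l i q * F.l p j / F.l p q) * W j)] at this
          simp only [hWp, hWq, mul_zero, sub_zero] at this
          rw [← this, hc, Finset.sum_div, Finset.mul_sum, ← Finset.sum_sub_distrib]
          refine Finset.sum_congr rfl fun j _ => ?_
          ring
      have z2 : ∀ i, ∑ j, F.l i j * W' j = 0 := by
        intro i
        by_cases hi : i = q
        swap
        · exact z1 i hi
        subst hi
        have h1 : ∑ a, F.l p a * ∑ j, F.l a j * W' j = 0 := by
          simp_rw [Finset.mul_sum]
          rw [Finset.sum_comm]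
          simp_rw [← mul_assoc, ← Finset.sum_mul, F.ll]
          simp
        rw [Finset.sum_eq_single i (fun a _ ha => by rw [z1 a ha, mul_zero]) (by simp)] at h1
        exact (mul_eq_zero.1 h1).resolve_left hl
      obtain ⟨u, hu, hu'⟩ := F.ex b W' (by
          intro j hj
          by_cases h : j = q
          · subst h
            apply hcb
            intro h0
            simp [hW', hWq, h0] at hj
          · apply hWb
            simpa [hW', h] using hj) z2 (by
          refine hbo.imp id fun h => ?_
          simp only [hW', if_neg hqo, sub_zero]
          rw [← h]
          exact hWs ⟨F.o, hpo, hqo⟩)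
      set v : F.J → k := fun j => u j - F.l j q * (u p / F.l p q) with hv
      have hvp : v p = 0 := by simp only [hv]; field_simp; ring
      have hvb : ∀ j, v j ≠ 0 → F.md j ≤ b := by
        intro j hj
        by_cases h : u j = 0
        · have h2 : F.l j q * (u p / F.l p q) ≠ 0 := fun h2 => hj (by simp [hv, h, h2])
          have h3 : u p ≠ 0 := fun h3 => h2 (by simp [h3])
          exact (F.l_md j q (left_ne_zero_of_mul h2)).trans (hm ▸ hu p h3)
        · exact hu j h
      have hv' : ∀ i, ∑ j, F.l i j * v j = W' i := by
        intro i
        simp only [hv, mul_sub, Finset.sum_sub_distrib, hu', ← mul_assoc, ← Finset.sum_mul, F.ll]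
        simp
      refine ⟨fun j => v j, fun j hj => hvb j hj, fun i => ?_⟩
      rw [sum_sub p q hpq (fun j => (F.l i j - F.l i q * F.l p j / F.l p q) * v j)]
      have e : ∀ j, (F.l i j - F.l i q * F.l p j / F.l p q) * v j =
        F.l i j * v j - F.l i q / F.l p q * (F.l p j * v j) := by intro j; ring
      have e2 : F.l i q - F.l i q * F.l p q / F.l p q = 0 := by field_simp; ring
      simp only [e2, hvp, mul_zero, zero_mul, sub_zero]
      simp_rw [e]
      rw [Finset.sum_sub_distrib, ← Finset.mul_sum, hv', hv']
      simp [hW', hpq, i.2.2, hWp, hWs] }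

theorem elim_card (F : Frame k U) (hU : IsUpperSet U) (h0 : 0 ∉ U) (p q : F.J)
    (hl : F.l p q ≠ 0) (hm : F.md p = F.md q) :
    Fintype.card (F.elim hU h0 p q hl hm).J < Fintype.card F.J := by
  classical
  have : Function.Injective (fun j : (F.elim hU h0 p q hl hm).J => (j.1 : F.J)) :=
    Subtype.val_injective
  refine Fintype.card_lt_of_injective_of_notMem _ this (b := p) ?_
  rintro ⟨j, hj⟩
  exact j.2.1 hj

theorem exists_minimal (hU : IsUpperSet U) (h0 : 0 ∉ U) (F : Frame k U) :
    ∃ F : Frame k U, ∀ p q, F.md p = F.md q → F.l p q = 0 := by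
  induction' h : Fintype.card F.J using Nat.strong_induction_on with N ih generalizing F
  by_cases hF : ∀ p q, F.md p = F.md q → F.l p q = 0
  · exact ⟨F, hF⟩
  push Not at hF
  obtain ⟨p, q, hm, hl⟩ := hF
  exact ih _ (h ▸ F.elim_card hU h0 p q hl hm) (F.elim hU h0 p q hl hm) rfl

end Frame

section TotSection

variable {k : Type*} [Field k] {n : ℕ}

/-- A graded free resolution of `R/I`, all homological degrees put together. -/
structure Tot (I : Ideal (MvPolynomial (Fin n) k)) where
  T : Type
  fin : Fintype T
  hd : T → ℕ
  D : T → ℤ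
  d : T → T → MvPolynomial (Fin n) k
  e : T → MvPolynomial (Fin n) k
  d_hd : ∀ p q, d p q ≠ 0 → hd q = hd p + 1
  e_hd : ∀ p, e p ≠ 0 → hd p = 0
  d_deg : ∀ p q, HomogOfDeg (d p q) (D q - D p)
  e_deg : ∀ p, HomogOfDeg (e p) (D p)
  dd : ∀ p q, ∑ j, d p j * d j q = 0
  ed : ∀ q, ∑ p, e p * d p q ∈ I
  ex : ∀ (i : ℕ) (w : T → MvPolynomial (Fin n) k), (∀ p, w p ≠ 0 → hd p = i) →
    (∀ p, ∑ j, d p j * w j = 0) → (i = 0 → ∑ j, e j * w j ∈ I) →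
    ∃ u : T → MvPolynomial (Fin n) k, (∀ p, u p ≠ 0 → hd p = i + 1) ∧
      ∀ p, ∑ j, d p j * u j = w p
  surj : ∃ w : T → MvPolynomial (Fin n) k, (∀ p, w p ≠ 0 → hd p = 0) ∧ ∑ j, e j * w j - 1 ∈ I

attribute [instance] Tot.fin

theorem build {T α : Type*} [Fintype T] [Inhabited α] (hd : T → ℕ) (Good : (T → α) → T → Prop)
    (loc : ∀ f g q, (∀ p, hd p ≤ hd q → f p = g p) → Good f q → Good g q)
    (step : ∀ f q, (∀ p, hd p < hd q → Good f p) →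
      ∃ a, ∀ g, (∀ p, hd p < hd q → g p = f p) → g q = a → Good g q) :
    ∃ f, ∀ q, Good f q := by
  classical
  have main : ∀ N, ∃ f, ∀ q, hd q < N → Good f q := by
    intro N
    induction N with
    | zero => exact ⟨fun _ => default, fun q h => by omega⟩
    | succ N ih =>
      obtain ⟨f, hf⟩ := ih
      have : ∀ q, ∃ a, hd q = N → ∀ g, (∀ p, hd p < hd q → g p = f p) → g q = a → Good g q := by
        intro q
        by_cases h : hd q = N
        · obtain ⟨a, ha⟩ := step f q (fun p hp => hf p (by omega))
          exact ⟨a, fun _ => ha⟩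
        · exact ⟨default, fun h' => absurd h' h⟩
      choose a ha using this
      refine ⟨fun q => if hd q < N then f q else a q, fun q hq => ?_⟩
      by_cases h : hd q < N
      · refine loc f _ q (fun p hp => ?_) (hf q h)
        rw [if_pos (by omega)]
      · refine ha q (by omega) _ (fun p hp => ?_) ?_
        · rw [if_pos (by omega)]
        · rw [if_neg h]
  obtain ⟨f, hf⟩ := main (Finset.univ.sup hd + 1)
  exact ⟨f, fun q => hf q (Nat.lt_succ_of_le (Finset.le_sup (Finset.mem_univ q)))⟩

namespace Tot

variable {I : Ideal (MvPolynomial (Fin n) k)}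

theorem d_zero (P : Tot I) {p q : P.T} (h : P.hd q ≠ P.hd p + 1) : P.d p q = 0 := by
  by_contra h'
  exact h (P.d_hd p q h')

/-- two-step composition vanishes on any family -/
theorem dd_sum (P : Tot I) (f : P.T → MvPolynomial (Fin n) k) (q : P.T) :
    ∑ p, P.d p q * ∑ p', P.d p' p * f p' = 0 := by
  simp_rw [Finset.mul_sum]
  rw [Finset.sum_comm]
  have : ∀ y, ∑ x, P.d x q * (P.d y x * f y) = (∑ x, P.d y x * P.d x q) * f y := by
    intro y
    rw [Finset.sum_mul]
    exact Finset.sum_congr rfl fun x _ => by ring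
  simp [this, P.dd]

theorem lift (P Q : Tot I) : ∃ φ : P.T → Q.T → MvPolynomial (Fin n) k,
    ∀ q, (∀ t, φ q t ≠ 0 → Q.hd t = P.hd q) ∧
      (∀ s, ∑ t, Q.d s t * φ q t = ∑ p, P.d p q * φ p s) ∧
      ∑ t, Q.e t * φ q t - P.e q ∈ I := by
  refine build P.hd (fun (φ : P.T → Q.T → MvPolynomial (Fin n) k) q => (∀ t, φ q t ≠ 0 → Q.hd t = P.hd q) ∧
      (∀ s, ∑ t, Q.d s t * φ q t = ∑ p, P.d p q * φ p s) ∧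
      ∑ t, Q.e t * φ q t - P.e q ∈ I) ?_ ?_
  · rintro f g q h ⟨h1, h2, h3⟩
    have hq := h q le_rfl
    refine ⟨by rwa [← hq], fun s => ?_, by rwa [← hq]⟩
    rw [← hq, h2]
    refine Finset.sum_congr rfl fun p _ => ?_
    by_cases hp : P.hd q = P.hd p + 1
    · rw [h p (by omega)]
    · simp [P.d_zero hp]
  · intro f q hf
    have aux : ∀ g : P.T → Q.T → MvPolynomial (Fin n) k, (∀ p, P.hd p < P.hd q → g p = f p) →
        ∀ s, ∑ p, P.d p q * g p s = ∑ p, P.d p q * f p s := by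
      intro g hg s
      refine Finset.sum_congr rfl fun p _ => ?_
      by_cases hp : P.hd q = P.hd p + 1
      · rw [hg p (by omega)]
      · simp [P.d_zero hp]
    obtain hq | ⟨N, hq⟩ : P.hd q = 0 ∨ ∃ N, P.hd q = N + 1 := by
      cases P.hd q <;> simp
    · obtain ⟨w, hw, hw1⟩ := Q.surj
      refine ⟨fun t => P.e q * w t, fun g hg hgq => ⟨?_, ?_, ?_⟩⟩
      · intro t ht
        rw [hgq] at ht
        rw [hq]
        exact hw t (right_ne_zero_of_mul ht)
      · intro s
        rw [hgq, Finset.sum_eq_zero, Finset.sum_eq_zero]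
        · intro p _
          rw [P.d_zero (by omega), zero_mul]
        · intro t _
          by_cases h : w t = 0
          · simp [h]
          · rw [Q.d_zero (by rw [hw t h]; omega), zero_mul]
      · rw [hgq]
        have : ∑ t, Q.e t * (P.e q * w t) - P.e q = P.e q * (∑ t, Q.e t * w t - 1) := by
          rw [mul_sub, Finset.mul_sum, mul_one]
          congr 1
          exact Finset.sum_congr rfl fun x _ => by ring
        rw [this]
        exact I.mul_mem_left _ hw1
    · obtain ⟨u, hu, hu'⟩ := Q.ex N (fun s => ∑ p, P.d p q * f p s) (by
          intro s hs
          obtain ⟨p, -, hp⟩ := Finset.exists_ne_zero_of_sum_ne_zero hs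
          have h1 := P.d_hd _ _ (left_ne_zero_of_mul hp)
          have h2 := (hf p (by omega)).1 s (right_ne_zero_of_mul hp)
          omega) (by
          intro s
          simp_rw [Finset.mul_sum]
          rw [Finset.sum_comm]
          have : ∀ p, ∑ t, Q.d s t * (P.d p q * f p t) = P.d p q * ∑ p', P.d p' p * f p' s := by
            intro p
            by_cases hp : P.hd q = P.hd p + 1
            · rw [← (hf p (by omega)).2.1 s, Finset.mul_sum]
              exact Finset.sum_congr rfl fun x _ => by ring
            · simp [P.d_zero hp]
          simp_rw [this]
          exact P.dd_sum (fun p => f p s) q) (by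
          intro hN
          simp_rw [Finset.mul_sum]
          rw [Finset.sum_comm]
          have : ∀ p, ∑ t, Q.e t * (P.d p q * f p t) =
              P.d p q * (∑ t, Q.e t * f p t - P.e p) + P.e p * P.d p q := by
            intro p
            have : ∑ t, Q.e t * (P.d p q * f p t) = P.d p q * (∑ t, Q.e t * f p t) := by
              rw [Finset.mul_sum]
              exact Finset.sum_congr rfl fun x _ => by ring
            rw [this]; ring
          simp_rw [this]
          rw [Finset.sum_add_distrib]
          refine I.add_mem (I.sum_mem fun p _ => ?_) (P.ed q)
          by_cases hp : P.hd q = P.hd p + 1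
          · exact I.mul_mem_left _ (hf p (by omega)).2.2
          · simp [P.d_zero hp])
      refine ⟨u, fun g hg hgq => ⟨?_, ?_, ?_⟩⟩
      · intro t ht
        rw [hgq] at ht
        rw [hq]
        exact hu t ht
      · intro s
        rw [aux g hg, hgq, hu']
      · rw [hgq, Finset.sum_eq_zero]
        · have : P.e q = 0 := by
            by_contra h
            have := P.e_hd q h
            omega
          simp [this]
        · intro t _
          by_cases h : u t = 0
          · simp [h]
          · have : Q.e t = 0 := by
              by_contra h'
              have := Q.e_hd t h'
              have := hu t h
              omega
            simp [this]

theorem homotopy (P : Tot I) (χ : P.T → P.T → MvPolynomial (Fin n) k)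
    (hχ : ∀ q, (∀ t, χ q t ≠ 0 → P.hd t = P.hd q) ∧
      (∀ s, ∑ t, P.d s t * χ q t = ∑ p, P.d p q * χ p s) ∧
      ∑ t, P.e t * χ q t ∈ I) :
    ∃ h : P.T → P.T → MvPolynomial (Fin n) k, ∀ q, (∀ t, h q t ≠ 0 → P.hd t = P.hd q + 1) ∧
      ∀ s, χ q s = ∑ t, P.d s t * h q t + ∑ p, P.d p q * h p s := by
  refine build P.hd (fun (h : P.T → P.T → MvPolynomial (Fin n) k) q => (∀ t, h q t ≠ 0 → P.hd t = P.hd q + 1) ∧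
      ∀ s, χ q s = ∑ t, P.d s t * h q t + ∑ p, P.d p q * h p s) ?_ ?_
  · rintro f g q h ⟨h1, h2⟩
    have hq := h q le_rfl
    refine ⟨by rwa [← hq], fun s => ?_⟩
    rw [← hq, h2]
    congr 1
    refine Finset.sum_congr rfl fun p _ => ?_
    by_cases hp : P.hd q = P.hd p + 1
    · rw [h p (by omega)]
    · simp [P.d_zero hp]
  · intro f q hf
    have aux : ∀ g : P.T → P.T → MvPolynomial (Fin n) k, (∀ p, P.hd p < P.hd q → g p = f p) →
        ∀ s, ∑ p, P.d p q * g p s = ∑ p, P.d p q * f p s := by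
      intro g hg s
      refine Finset.sum_congr rfl fun p _ => ?_
      by_cases hp : P.hd q = P.hd p + 1
      · rw [hg p (by omega)]
      · simp [P.d_zero hp]
    obtain ⟨u, hu, hu'⟩ := P.ex (P.hd q) (fun s => χ q s - ∑ p, P.d p q * f p s) (by
        intro s hs
        by_cases h : χ q s = 0
        · have hs' : ∑ p, P.d p q * f p s ≠ 0 := fun h' => hs (by simp [h, h'])
          obtain ⟨p, -, hp⟩ := Finset.exists_ne_zero_of_sum_ne_zero hs'
          have h1 := P.d_hd _ _ (left_ne_zero_of_mul hp)
          have h2 := (hf p (by omega)).1 s (right_ne_zero_of_mul hp)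
          omega
        · exact (hχ q).1 s h) (by
        intro s
        simp_rw [mul_sub, Finset.sum_sub_distrib]
        rw [(hχ q).2.1 s]
        simp_rw [Finset.mul_sum]
        rw [Finset.sum_comm (γ := P.T), ← Finset.sum_sub_distrib]
        have : ∀ p, P.d p q * χ p s - ∑ t, P.d s t * (P.d p q * f p t) =
            P.d p q * ∑ p', P.d p' p * f p' s := by
          intro p
          by_cases hp : P.hd q = P.hd p + 1
          · have e : ∑ t, P.d s t * (P.d p q * f p t) = P.d p q * ∑ t, P.d s t * f p t := by
              rw [Finset.mul_sum]
              exact Finset.sum_congr rfl fun x _ => by ring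
            rw [e, (hf p (by omega)).2 s]
            ring
          · simp [P.d_zero hp]
        simp_rw [this]
        exact P.dd_sum (fun p => f p s) q) (by
        intro h0
        have : ∀ s, ∑ p, P.d p q * f p s = 0 := fun s => Finset.sum_eq_zero fun p _ => by
          rw [P.d_zero (by omega), zero_mul]
        simp_rw [this, sub_zero]
        exact (hχ q).2.2)
    refine ⟨u, fun g hg hgq => ⟨?_, ?_⟩⟩
    · rwa [hgq]
    · intro s
      rw [aux g hg, hgq, hu']
      ring

end Tot

/-- Homogeneous component of integer degree. -/
noncomputable def zcomp (d : ℤ) : MvPolynomial (Fin n) k →+ MvPolynomial (Fin n) k :=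
  if 0 ≤ d then (homogeneousComponent d.toNat).toAddMonoidHom else 0

theorem coeff_zcomp (d : ℤ) (p : MvPolynomial (Fin n) k) (b : Fin n →₀ ℕ) :
    coeff b (zcomp d p) = if (b.degree : ℤ) = d then coeff b p else 0 := by
  unfold zcomp
  by_cases h : 0 ≤ d
  · rw [if_pos h]
    show coeff b (homogeneousComponent d.toNat p) = _
    rw [coeff_homogeneousComponent]
    congr 1
    simp only [eq_iff_iff]
    omega
  · rw [if_neg h, if_neg (by omega)]
    simp

theorem HomogOfDeg.coeff_deg {p : MvPolynomial (Fin n) k} {d : ℤ} (h : HomogOfDeg p d)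
    {b : Fin n →₀ ℕ} (hb : coeff b p ≠ 0) : (b.degree : ℤ) = d := by
  rcases h with rfl | ⟨m, rfl, h⟩
  · simp at hb
  · have := h hb
    rw [← this, Finsupp.degree_eq_weight_one]
    rfl

theorem zcomp_mul {p : MvPolynomial (Fin n) k} {a : ℤ} (h : HomogOfDeg p a) (c c' : ℤ)
    (hc : c' = a + c) (q : MvPolynomial (Fin n) k) : zcomp c' (p * q) = p * zcomp c q := by
  classical
  ext b
  rw [coeff_zcomp, coeff_mul, coeff_mul]
  simp_rw [coeff_zcomp]
  have : ∀ x ∈ Finset.HasAntidiagonal.antidiagonal b, coeff x.1 p * (if (x.2.degree : ℤ) = c then coeff x.2 q else 0)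
      = if (b.degree : ℤ) = c' then coeff x.1 p * coeff x.2 q else 0 := by
    intro x hx
    rw [Finset.HasAntidiagonal.mem_antidiagonal] at hx
    by_cases h0 : coeff x.1 p = 0
    · simp [h0]
    · have h1 := h.coeff_deg h0
      have h2 : b.degree = x.1.degree + x.2.degree := by rw [← hx]; simp
      have : ((b.degree : ℤ) = c') ↔ ((x.2.degree : ℤ) = c) := by rw [h2]; push_cast; omega
      simp [this]
  rw [Finset.sum_congr rfl this]
  split_ifs <;> simp

theorem zcomp_self {p : MvPolynomial (Fin n) k} {a : ℤ} (h : HomogOfDeg p a) : zcomp a p = p := by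
  ext b
  rw [coeff_zcomp]
  split_ifs with hb
  · rfl
  · by_contra h'
    exact hb (h.coeff_deg (Ne.symm h'))

theorem Tot.compare {I : Ideal (MvPolynomial (Fin n) k)}
    (hI : ∀ (d : ℤ), ∀ p ∈ I, zcomp d p ∈ I) (P Q : Tot I)
    (hmin : ∀ p q, constantCoeff (P.d p q) = 0) (q : P.T) :
    ∃ t : Q.T, Q.hd t = P.hd q ∧ Q.D t = P.D q := by
  classical
  obtain ⟨φ₀, hφ₀⟩ := P.lift Q
  obtain ⟨ψ, hψ⟩ := Q.lift P
  obtain ⟨φ, hφdef⟩ : ∃ φ : P.T → Q.T → MvPolynomial (Fin n) k,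
    ∀ q t, φ q t = zcomp (P.D q - Q.D t) (φ₀ q t) := ⟨_, fun _ _ => rfl⟩
  have hφ : ∀ q, (∀ t, φ q t ≠ 0 → Q.hd t = P.hd q) ∧
      (∀ s, ∑ t, Q.d s t * φ q t = ∑ p, P.d p q * φ p s) ∧
      ∑ t, Q.e t * φ q t - P.e q ∈ I := by
    intro q
    obtain ⟨h1, h2, h3⟩ := hφ₀ q
    refine ⟨fun t ht => h1 t fun h => ht (by rw [hφdef, h, map_zero]), fun s => ?_, ?_⟩
    · have := congrArg (zcomp (P.D q - Q.D s)) (h2 s)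
      rw [map_sum, map_sum] at this
      convert! this using 2 with t _ p _
      · rw [hφdef, zcomp_mul (Q.d_deg s t)]
        ring
      · rw [hφdef, zcomp_mul (P.d_deg p q)]
        ring
    · have := hI (P.D q) _ h3
      rw [map_sub, map_sum, zcomp_self (P.e_deg q)] at this
      convert! this using 3 with t _
      rw [hφdef, zcomp_mul (Q.e_deg t)]
      ring
  obtain ⟨h, hh⟩ := P.homotopy (fun q s => ∑ t, φ q t * ψ t s - if s = q then 1 else 0) (by
    intro q
    refine ⟨?_, ?_, ?_⟩
    · intro s hs
      by_cases hsq : s = q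
      · rw [hsq]
      · rw [if_neg hsq, sub_zero] at hs
        obtain ⟨t, -, ht⟩ := Finset.exists_ne_zero_of_sum_ne_zero hs
        rw [(hψ t).1 s (right_ne_zero_of_mul ht), (hφ q).1 t (left_ne_zero_of_mul ht)]
    · intro s
      simp_rw [mul_sub, Finset.sum_sub_distrib]
      congr 1
      · calc ∑ s', P.d s s' * ∑ t, φ q t * ψ t s' = ∑ t, φ q t * ∑ s', P.d s s' * ψ t s' := by
              simp_rw [Finset.mul_sum]
              rw [Finset.sum_comm]
              exact Finset.sum_congr rfl fun _ _ => Finset.sum_congr rfl fun _ _ => by ring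
          _ = ∑ t, φ q t * ∑ t', Q.d t' t * ψ t' s := by simp_rw [(hψ _).2.1]
          _ = ∑ t', (∑ t, Q.d t' t * φ q t) * ψ t' s := by
              simp_rw [Finset.mul_sum, Finset.sum_mul]
              rw [Finset.sum_comm]
              exact Finset.sum_congr rfl fun _ _ => Finset.sum_congr rfl fun _ _ => by ring
          _ = ∑ t', (∑ p, P.d p q * φ p t') * ψ t' s := by simp_rw [(hφ _).2.1]
          _ = _ := by
              simp_rw [Finset.mul_sum, Finset.sum_mul]
              rw [Finset.sum_comm]
              exact Finset.sum_congr rfl fun _ _ => Finset.sum_congr rfl fun _ _ => by ring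
      · simp
    · have e : ∑ s, P.e s * (∑ t, φ q t * ψ t s - if s = q then 1 else 0) =
          ∑ t, φ q t * (∑ s, P.e s * ψ t s - Q.e t) + (∑ t, Q.e t * φ q t - P.e q) := by
        have e1 : ∑ s, P.e s * ∑ t, φ q t * ψ t s = ∑ t, φ q t * ∑ s, P.e s * ψ t s := by
          simp_rw [Finset.mul_sum]
          rw [Finset.sum_comm]
          exact Finset.sum_congr rfl fun _ _ => Finset.sum_congr rfl fun _ _ => by ring
        have e2 : ∑ t, Q.e t * φ q t = ∑ t, φ q t * Q.e t :=
          Finset.sum_congr rfl fun _ _ => by ring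
        simp_rw [mul_sub, Finset.sum_sub_distrib]
        rw [e1, e2]
        simp
      rw [e]
      exact I.add_mem (I.sum_mem fun t _ => I.mul_mem_left _ (hψ t).2.2) (hφ q).2.2)
  have h1 := congrArg constantCoeff ((hh q).2 q)
  simp only [map_sub, map_add, map_sum, map_mul, hmin, zero_mul, if_true, map_one,
    Finset.sum_const_zero, add_zero] at h1
  have h2 : ∑ t, constantCoeff (φ q t) * constantCoeff (ψ t q) ≠ 0 := by
    rw [sub_eq_zero.1 h1]
    exact one_ne_zero
  obtain ⟨t, -, ht⟩ := Finset.exists_ne_zero_of_sum_ne_zero h2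
  have ht' := left_ne_zero_of_mul ht
  refine ⟨t, (hφ q).1 t fun h0 => ht' (by rw [h0, map_zero]), ?_⟩
  rw [hφdef, constantCoeff_eq, coeff_zcomp] at ht'
  by_contra hne
  rw [if_neg (by simp; omega)] at ht'
  exact ht' rfl

end TotSection

section Conversions

variable {k : Type*} [Field k] {n : ℕ}

namespace Frame

variable {U : Set (Fin n →₀ ℕ)} (F : Frame k U)

/-- The differential over the polynomial ring. -/
noncomputable def pd (p q : F.J) : MvPolynomial (Fin n) k := monomial (F.md q - F.md p) (F.l p q)

open Classical in
/-- The component of multidegree `b`. -/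
noncomputable def cmp (b : Fin n →₀ ℕ) (w : F.J → MvPolynomial (Fin n) k) (j : F.J) : k :=
  if F.md j ≤ b then coeff (b - F.md j) (w j) else 0

theorem cmp_pd (b : Fin n →₀ ℕ) (w : F.J → MvPolynomial (Fin n) k) (p : F.J) :
    F.cmp b (fun p => ∑ q, F.pd p q * w q) p = ∑ q, F.l p q * F.cmp b w q := by
  classical
  unfold cmp
  by_cases hp : F.md p ≤ b
  · rw [if_pos hp, coeff_sum]
    refine Finset.sum_congr rfl fun q _ => ?_
    by_cases hl : F.l p q = 0
    · simp [pd, hl]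
    have hpq := F.l_md p q hl
    rw [pd, coeff_monomial_mul']
    by_cases hq : F.md q ≤ b
    · rw [if_pos hq, if_pos (tsub_le_tsub_right hq _), tsub_tsub_tsub_cancel_right hpq]
    · rw [if_neg hq, if_neg, mul_zero]
      intro h
      exact hq ((tsub_le_tsub_iff_right hp).1 h)
  · rw [if_neg hp]
    symm
    refine Finset.sum_eq_zero fun q _ => ?_
    by_cases hl : F.l p q = 0
    · simp [hl]
    rw [if_neg fun h => hp ((F.l_md p q hl).trans h), mul_zero]

theorem cmp_ext {w w' : F.J → MvPolynomial (Fin n) k} (h : ∀ b j, F.cmp b w j = F.cmp b w' j) :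
    w = w' := by
  ext j m
  have := h (m + F.md j) j
  simpa [cmp] using this

theorem pd_ex {I : Ideal (MvPolynomial (Fin n) k)} (hI : ∀ p, p ∈ I ↔ ∀ b ∈ p.support, b ∈ U)
    (w : F.J → MvPolynomial (Fin n) k) (hw : ∀ p, ∑ j, F.pd p j * w j = 0) (ho : w F.o ∈ I) :
    ∃ u : F.J → MvPolynomial (Fin n) k, ∀ p, ∑ j, F.pd p j * u j = w p := by
  classical
  have h1 : ∀ b, ∃ u : F.J → k, (∀ j, u j ≠ 0 → F.md j ≤ b) ∧
      ∀ p, ∑ j, F.l p j * u j = F.cmp b w p := by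
    intro b
    refine F.ex b (F.cmp b w) ?_ ?_ ?_
    · intro j hj
      by_contra h
      exact hj (by simp [cmp, h])
    · intro p
      rw [← cmp_pd]
      simp [cmp, hw]
    · by_contra! h
      refine h.1 ((hI _).1 ho b ?_)
      simpa [cmp, F.md_o] using h.2
  choose u hu hu' using h1
  set B : Finset (Fin n →₀ ℕ) :=
    Finset.univ.biUnion fun j => (w j).support.image (fun m => m + F.md j) with hB
  set v : F.J → MvPolynomial (Fin n) k := fun j => ∑ b ∈ B, monomial (b - F.md j) (u b j) with hv
  have hvc : ∀ b j, F.cmp b v j = if b ∈ B then u b j else 0 := by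
    intro b j
    by_cases hj : F.md j ≤ b
    · simp only [cmp, if_pos hj, hv, coeff_sum, coeff_monomial]
      rw [← Finset.sum_ite_eq' B b (fun b => u b j)]
      refine Finset.sum_congr rfl fun b' _ => ?_
      by_cases h0 : u b' j = 0
      · simp [h0]
      · have : (b' - F.md j = b - F.md j) ↔ b' = b := by
          constructor
          · intro h
            rw [← tsub_add_cancel_of_le hj, ← h, tsub_add_cancel_of_le (hu b' j h0)]
          · rintro rfl; rfl
        simp [this]
    · have : u b j = 0 := by
        by_contra h
        exact hj (hu b j h)
      simp [cmp, hj, this]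
  refine ⟨v, fun p => ?_⟩
  refine congrFun (F.cmp_ext (w := fun p => ∑ j, F.pd p j * v j) fun b j => ?_) p
  rw [cmp_pd]
  simp_rw [hvc]
  by_cases hb : b ∈ B
  · simp only [if_pos hb]
    exact hu' b j
  · simp only [if_neg hb, mul_zero, Finset.sum_const_zero]
    symm
    by_contra h
    apply hb
    rw [hB, Finset.mem_biUnion]
    refine ⟨j, Finset.mem_univ _, Finset.mem_image.2 ⟨b - F.md j, ?_, ?_⟩⟩
    · rw [mem_support_iff]
      intro h0
      apply h
      simp [cmp, h0]
    · refine tsub_add_cancel_of_le ?_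
      by_contra h0
      apply h
      simp [cmp, h0]

open Classical in
/-- The resolution over the polynomial ring defined by a frame. -/
noncomputable def toTot {I : Ideal (MvPolynomial (Fin n) k)}
    (hI : ∀ p, p ∈ I ↔ ∀ b ∈ p.support, b ∈ U) : Tot I where
  T := F.J
  fin := inferInstance
  hd := F.hd
  D := fun j => ((F.md j).degree : ℤ)
  d := F.pd
  e := fun j => if j = F.o then 1 else 0
  d_hd := fun p q h => F.l_hd p q fun h0 => h (by simp [pd, h0])
  e_hd := fun p h => by
    by_contra h'
    rw [F.hd_o] at h'
    simp [h'] at h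
  d_deg := fun p q => by
    by_cases hl : F.l p q = 0
    · left; simp [pd, hl]
    · right
      have h := F.l_md p q hl
      refine ⟨(F.md q - F.md p).degree, ?_, isHomogeneous_monomial _ rfl⟩
      have : (F.md q).degree = (F.md q - F.md p).degree + (F.md p).degree := by
        rw [← map_add, tsub_add_cancel_of_le h]
      omega
  e_deg := fun p => by
    by_cases h : p = F.o
    · right
      refine ⟨0, by simp [h, F.md_o], ?_⟩
      simpa [h] using isHomogeneous_one _ _
    · left
      simp [h]
  dd := fun p q => by
    have : ∀ j, F.pd p j * F.pd j q = monomial (F.md q - F.md p) (F.l p j * F.l j q) := by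
      intro j
      by_cases h1 : F.l p j = 0
      · simp [pd, h1]
      by_cases h2 : F.l j q = 0
      · simp [pd, h2]
      rw [pd, pd, monomial_mul, add_comm, tsub_add_tsub_cancel (F.l_md _ _ h2) (F.l_md _ _ h1)]
    simp_rw [this]
    rw [← map_sum, F.ll, map_zero]
  ed := fun q => by
    simp only [ite_mul, one_mul, zero_mul, Finset.sum_ite_eq', Finset.mem_univ, if_true]
    rw [hI, pd, F.md_o, tsub_zero]
    intro b hb
    rw [mem_support_iff, coeff_monomial] at hb
    by_cases h : F.md q = b
    · rw [if_pos h] at hb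
      exact h ▸ F.l_o q hb
    · simp [h] at hb
  ex := by
    intro i w hwi hw ho
    obtain ⟨u, hu⟩ := F.pd_ex hI w hw (by
      by_cases h : w F.o = 0
      · rw [h]; exact I.zero_mem
      · have := hwi _ h
        rw [(F.hd_o _).2 rfl] at this
        simpa using ho this.symm)
    refine ⟨fun j => if F.hd j = i + 1 then u j else 0, fun p hp => ?_, fun p => ?_⟩
    · by_contra h
      simp [h] at hp
    · by_cases hp : F.hd p = i
      · rw [← hu p]
        refine Finset.sum_congr rfl fun j _ => ?_
        by_cases hl : F.l p j = 0
        · simp [pd, hl]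
        · have := F.l_hd p j hl
          simp only [if_pos (show F.hd j = i + 1 by omega)]
      · have : w p = 0 := by
          by_contra h
          exact hp (hwi p h)
        rw [this]
        refine Finset.sum_eq_zero fun j _ => ?_
        by_cases hl : F.l p j = 0
        · simp [pd, hl]
        · have := F.l_hd p j hl
          simp only [if_neg (show ¬ F.hd j = i + 1 by omega), mul_zero]
  surj := by
    refine ⟨fun j => if j = F.o then 1 else 0, fun p hp => ?_, ?_⟩
    · by_contra h
      rw [F.hd_o] at h
      simp [h] at hp
    · simp

end Frame

/-- The indices in homological degree `i`. -/
noncomputable def Tot.eqv {I : Ideal (MvPolynomial (Fin n) k)} (P : Tot I) (i : ℕ) :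
    Fin (Nat.card {t : P.T // P.hd t = i}) ≃ {t : P.T // P.hd t = i} :=
  (Finite.equivFin _).symm

theorem Tot.eqv_hd {I : Ideal (MvPolynomial (Fin n) k)} (P : Tot I) (i : ℕ) (r) :
    P.hd (P.eqv i r).1 = i := (P.eqv i r).2

theorem Tot.eqv_surj {I : Ideal (MvPolynomial (Fin n) k)} (P : Tot I) {i : ℕ} {t : P.T}
    (h : P.hd t = i) : ∃ r, (P.eqv i r).1 = t :=
  ⟨(P.eqv i).symm ⟨t, h⟩, by simp⟩

theorem Tot.sum_eqv {I : Ideal (MvPolynomial (Fin n) k)} (P : Tot I) (i : ℕ)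
    (g : P.T → MvPolynomial (Fin n) k) (hg : ∀ t, g t ≠ 0 → P.hd t = i) :
    ∑ r, g (P.eqv i r).1 = ∑ t, g t := by
  refine Fintype.sum_of_injective (fun r => (P.eqv i r).1)
    (Subtype.val_injective.comp (P.eqv i).injective) _ _ ?_ (fun _ => rfl)
  intro t ht
  by_contra h
  exact ht (P.eqv_surj (hg t h))

theorem Tot.extend {I : Ideal (MvPolynomial (Fin n) k)} (P : Tot I) (i : ℕ)
    (w : Fin (Nat.card {t : P.T // P.hd t = i}) → MvPolynomial (Fin n) k) :
    ∃ W : P.T → MvPolynomial (Fin n) k, (∀ r, W (P.eqv i r).1 = w r) ∧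
      ∀ t, W t ≠ 0 → P.hd t = i := by
  classical
  refine ⟨fun t => if h : P.hd t = i then w ((P.eqv i).symm ⟨t, h⟩) else 0, fun r => ?_, ?_⟩
  · simp only [dif_pos (P.eqv_hd i r)]
    simp
  · intro t ht
    by_contra h
    simp [h] at ht

theorem Tot.exact_aux {I : Ideal (MvPolynomial (Fin n) k)} (P : Tot I) (i : ℕ)
    (w : Fin (Nat.card {t : P.T // P.hd t = i}) → MvPolynomial (Fin n) k)
    (W : P.T → MvPolynomial (Fin n) k) (hW : ∀ r, W (P.eqv i r).1 = w r)
    (hWs : ∀ t, W t ≠ 0 → P.hd t = i) (h0 : ∀ p, ∑ j, P.d p j * W j = 0)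
    (he : i = 0 → ∑ j, P.e j * W j ∈ I) :
    ∃ u : Fin (Nat.card {t : P.T // P.hd t = i + 1}) → MvPolynomial (Fin n) k,
      Matrix.mulVec (Matrix.of fun r c => P.d (P.eqv i r).1 (P.eqv (i + 1) c).1) u = w := by
  obtain ⟨u, hu, hu'⟩ := P.ex i W hWs h0 he
  refine ⟨fun c => u (P.eqv (i + 1) c).1, ?_⟩
  ext1 r
  rw [← hW, ← hu']
  exact P.sum_eqv (i + 1) (fun t => P.d (P.eqv i r).1 t * u t)
    (fun t ht => hu t (right_ne_zero_of_mul ht))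

/-- From the total form to the graded form. -/
noncomputable def Tot.toRes {I : Ideal (MvPolynomial (Fin n) k)} (P : Tot I) : GradedFreeRes I where
  len := Finset.univ.sup P.hd
  b := fun i => Nat.card {t : P.T // P.hd t = i}
  hb := by
    intro i hi
    have : IsEmpty {t : P.T // P.hd t = i} := by
      refine ⟨fun t => ?_⟩
      have := Finset.le_sup (f := P.hd) (Finset.mem_univ t.1)
      have := t.2
      omega
    simp
  D := fun i r => P.D (P.eqv i r).1
  A := fun i => Matrix.of fun r c => P.d (P.eqv i r).1 (P.eqv (i + 1) c).1
  v := fun r => P.e (P.eqv 0 r).1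
  hv := fun r => P.e_deg _
  hA := fun i r c => P.d_deg _ _
  haug := by
    intro y
    obtain ⟨y, rfl⟩ := Ideal.Quotient.mk_surjective y
    obtain ⟨w, hw, hw1⟩ := P.surj
    refine ⟨fun r => y * w (P.eqv 0 r).1, ?_⟩
    show Ideal.Quotient.mk I (∑ r, y * w (P.eqv 0 r).1 * P.e (P.eqv 0 r).1) = _
    rw [P.sum_eqv 0 (fun t => y * w t * P.e t)
      (fun t ht => hw t (right_ne_zero_of_mul (left_ne_zero_of_mul ht))), Ideal.Quotient.eq]
    have : ∑ t, y * w t * P.e t - y = y * (∑ t, P.e t * w t - 1) := by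
      rw [mul_sub, Finset.mul_sum, mul_one]
      congr 1
      exact Finset.sum_congr rfl fun _ _ => by ring
    rw [this]
    exact I.mul_mem_left _ hw1
  hex0 := by
    intro w
    constructor
    · intro h
      obtain ⟨W, hW, hWs⟩ := P.extend 0 w
      refine P.exact_aux 0 w W hW hWs ?_ ?_
      · intro p
        refine Finset.sum_eq_zero fun j _ => ?_
        by_cases h : W j = 0
        · simp [h]
        · rw [P.d_zero (by rw [hWs j h]; omega), zero_mul]
      · intro _
        rw [← P.sum_eqv 0 (fun j => P.e j * W j) (fun t ht => hWs t (right_ne_zero_of_mul ht))]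
        simp only [hW]
        rw [Ideal.Quotient.eq_zero_iff_mem] at h
        simpa only [mul_comm] using h
    · rintro ⟨u, rfl⟩
      rw [Ideal.Quotient.eq_zero_iff_mem]
      simp only [Matrix.mulVec, dotProduct, Finset.sum_mul, Matrix.of_apply]
      rw [Finset.sum_comm]
      refine I.sum_mem fun c _ => ?_
      have : ∑ r, P.d (P.eqv 0 r).1 (P.eqv 1 c).1 * u c * P.e (P.eqv 0 r).1 =
          u c * ∑ t, P.e t * P.d t (P.eqv 1 c).1 := by
        rw [← P.sum_eqv 0 (fun t => P.e t * P.d t (P.eqv 1 c).1)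
          (fun t ht => P.e_hd t (left_ne_zero_of_mul ht)), Finset.mul_sum]
        exact Finset.sum_congr rfl fun _ _ => by ring
      exact this ▸ I.mul_mem_left _ (P.ed _)
  hex := by
    intro i w
    constructor
    · intro h
      obtain ⟨W, hW, hWs⟩ := P.extend (i + 1) w
      refine P.exact_aux (i + 1) w W hW hWs ?_ (by simp)
      intro p
      by_cases hp : P.hd p = i
      · obtain ⟨r, rfl⟩ := P.eqv_surj hp
        rw [← P.sum_eqv (i + 1) (fun j => P.d (P.eqv i r).1 j * W j)
          (fun t ht => hWs t (right_ne_zero_of_mul ht))]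
        simp only [hW]
        exact congrFun h r
      · refine Finset.sum_eq_zero fun j _ => ?_
        by_cases h : W j = 0
        · simp [h]
        · rw [P.d_zero (by rw [hWs j h]; omega), zero_mul]
    · rintro ⟨u, rfl⟩
      rw [Matrix.mulVec_mulVec]
      refine Eq.trans (congrArg (fun M => Matrix.mulVec M u) ?_) (Matrix.zero_mulVec u)
      ext1 r c
      rw [Matrix.mul_apply, Matrix.zero_apply]
      simp only [Matrix.of_apply]
      rw [
        P.sum_eqv (i + 1) (fun t => P.d (P.eqv i r).1 t * P.d t (P.eqv (i + 1 + 1) c).1)]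
      · exact P.dd _ _
      · intro t ht
        rw [P.d_hd _ _ (left_ne_zero_of_mul ht), P.eqv_hd]

namespace GradedFreeRes

variable {I : Ideal (MvPolynomial (Fin n) k)} (F : GradedFreeRes I)

/-- All indices. -/
abbrev TT : Type := Σ i : ℕ, Fin (F.b i)

instance : Finite F.TT := by
  refine Finite.of_injective (β := Σ i : Fin (F.len + 1), Fin (F.b i))
    (fun t => ⟨⟨t.1, ?_⟩, t.2⟩) ?_
  · by_contra h
    have := F.hb t.1 (by omega)
    exact (Fin.cast this t.2).elim0
  · rintro ⟨i, r⟩ ⟨j, s⟩ h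
    simp only [Sigma.mk.injEq, Fin.mk.injEq] at h
    obtain ⟨rfl, h⟩ := h
    rw [heq_iff_eq] at h
    rw [h]

noncomputable instance : Fintype F.TT := Fintype.ofFinite _

/-- Index constructor. -/
def ix (i : ℕ) (r : Fin (F.b i)) : F.TT := ⟨i, r⟩

theorem sum_ix (i : ℕ) (g : F.TT → MvPolynomial (Fin n) k) (hg : ∀ t, g t ≠ 0 → t.1 = i) :
    ∑ t, g t = ∑ r, g (F.ix i r) := by
  symm
  refine Fintype.sum_of_injective (F.ix i) ?_ _ _ ?_ (fun _ => rfl)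
  · intro r s h
    simp only [ix, Sigma.mk.injEq, heq_eq_eq, true_and] at h
    exact h
  · rintro ⟨j, t⟩ ht
    by_contra h
    obtain rfl : j = i := hg _ h
    exact ht ⟨t, rfl⟩

/-- Total differential. -/
noncomputable def td (p q : F.TT) : MvPolynomial (Fin n) k :=
  if h : q.1 = p.1 + 1 then F.A p.1 p.2 (h ▸ q.2) else 0

theorem td_ix (i : ℕ) (r : Fin (F.b i)) (c : Fin (F.b (i + 1))) :
    F.td (F.ix i r) (F.ix (i + 1) c) = F.A i r c := by
  simp [td, ix]

theorem td_hd (p q : F.TT) (h : F.td p q ≠ 0) : q.1 = p.1 + 1 := by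
  by_contra h'
  exact h (by simp [td, h'])

/-- Total augmentation. -/
noncomputable def te (p : F.TT) : MvPolynomial (Fin n) k :=
  if h : p.1 = 0 then F.v (h ▸ p.2) else 0

theorem te_ix (r : Fin (F.b 0)) : F.te (F.ix 0 r) = F.v r := by
  simp [te, ix]

theorem te_hd (p : F.TT) (h : F.te p ≠ 0) : p.1 = 0 := by
  by_contra h'
  exact h (by simp [te, h'])

theorem extend (i : ℕ) (u : Fin (F.b i) → MvPolynomial (Fin n) k) :
    ∃ W : F.TT → MvPolynomial (Fin n) k, (∀ r, W (F.ix i r) = u r) ∧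
      ∀ t, W t ≠ 0 → t.1 = i := by
  refine ⟨fun t => if h : t.1 = i then u (h ▸ t.2) else 0, fun r => by simp [ix], ?_⟩
  intro t ht
  by_contra h
  simp [h] at ht

/-- From the graded form to the total form. -/
noncomputable def toTot : Tot I where
  T := F.TT
  fin := inferInstance
  hd := fun t => t.1
  D := fun t => F.D t.1 t.2
  d := F.td
  e := F.te
  d_hd := F.td_hd
  e_hd := F.te_hd
  d_deg := by
    rintro ⟨i, r⟩ ⟨j, c⟩
    by_cases h : j = i + 1
    · subst h
      have := F.hA i r c
      rw [← F.td_ix] at this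
      exact this
    · left
      simp [td, h]
  e_deg := by
    rintro ⟨i, r⟩
    by_cases h : i = 0
    · subst h
      have := F.hv r
      rw [← F.te_ix] at this
      exact this
    · left
      simp [te, h]
  dd := by
    rintro ⟨i, r⟩ ⟨j, c⟩
    rw [F.sum_ix (i + 1) _ (fun t ht => F.td_hd _ _ (left_ne_zero_of_mul ht))]
    by_cases h : j = i + 1 + 1
    · subst h
      have := (F.hex i).apply_apply_eq_zero (Pi.single c 1)
      have := congrFun this r
      simp only [Matrix.mulVec_single_one] at this
      rw [← (show _ = (0 : MvPolynomial (Fin n) k) from this)]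
      refine Finset.sum_congr rfl fun s _ => ?_
      exact congrArg₂ _ (F.td_ix _ _ _) (F.td_ix _ _ _)
    · refine Finset.sum_eq_zero fun s _ => ?_
      have : F.td (F.ix (i + 1) s) ⟨j, c⟩ = 0 := by
        by_contra h'
        exact h (F.td_hd _ _ h')
      rw [this, mul_zero]
  ed := by
    rintro ⟨j, c⟩
    rw [F.sum_ix 0 _ (fun t ht => F.te_hd _ (left_ne_zero_of_mul ht))]
    by_cases h : j = 0 + 1
    · subst h
      have := F.hex0.apply_apply_eq_zero (Pi.single c 1)
      rw [Ideal.Quotient.eq_zero_iff_mem] at this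
      simp only [Matrix.mulVec_single_one] at this
      convert this using 1
      refine Finset.sum_congr rfl fun s _ => ?_
      rw [F.te_ix, mul_comm]
      exact congrArg (· * _) (F.td_ix _ _ _)
    · refine I.sum_mem fun s _ => ?_
      have : F.td (F.ix 0 s) ⟨j, c⟩ = 0 := by
        by_contra h'
        exact h (F.td_hd _ _ h')
      rw [this, mul_zero]
      exact I.zero_mem
  ex := by
    intro i w hw hd0 he
    have : ∃ u : Fin (F.b (i + 1)) → MvPolynomial (Fin n) k,
        (F.A i).mulVec u = fun r => w (F.ix i r) := by
      cases i with
      | zero =>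
        refine (F.hex0 _).1 ?_
        have := he rfl
        rw [F.sum_ix 0 _ (fun t ht => hw _ (right_ne_zero_of_mul ht))] at this
        rw [Ideal.Quotient.eq_zero_iff_mem]
        convert this using 1
        refine Finset.sum_congr rfl fun s _ => ?_
        rw [F.te_ix, mul_comm]
      | succ i =>
        refine (F.hex i _).1 ?_
        ext1 r
        have := hd0 (F.ix i r)
        rw [F.sum_ix (i + 1) _ (fun t ht => hw _ (right_ne_zero_of_mul ht))] at this
        rw [Pi.zero_apply, ← this]
        simp only [Matrix.mulVec, dotProduct]
        refine Finset.sum_congr rfl fun s _ => ?_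
        rw [F.td_ix]
    obtain ⟨u, hu⟩ := this
    obtain ⟨W, hW, hWs⟩ := F.extend (i + 1) u
    refine ⟨W, hWs, ?_⟩
    rintro ⟨j, r⟩
    rw [F.sum_ix (i + 1) _ (fun t ht => hWs _ (right_ne_zero_of_mul ht))]
    by_cases h : j = i
    · subst h
      refine Eq.trans ?_ (congrFun hu r)
      refine Finset.sum_congr rfl fun s _ => ?_
      rw [hW]
      exact congrArg (· * _) (F.td_ix _ _ _)
    · have : w ⟨j, r⟩ = 0 := by
        by_contra h'
        exact h (hw _ h')
      rw [this]
      refine Finset.sum_eq_zero fun s _ => ?_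
      have : F.td ⟨j, r⟩ (F.ix (i + 1) s) = 0 := by
        by_contra h'
        have := F.td_hd _ _ h'
        simp only [ix] at this
        omega
      rw [this, zero_mul]
  surj := by
    obtain ⟨w, hw⟩ := F.haug 1
    obtain ⟨W, hW, hWs⟩ := F.extend 0 w
    refine ⟨W, hWs, ?_⟩
    rw [← Ideal.Quotient.eq, map_one, ← hw,
      F.sum_ix 0 _ (fun t ht => hWs _ (right_ne_zero_of_mul ht))]
    show Ideal.Quotient.mk I _ = Ideal.Quotient.mk I _
    congr 1
    refine Finset.sum_congr rfl fun s _ => ?_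
    rw [F.te_ix, mul_comm, hW]

end GradedFreeRes

end Conversions

section Final

variable {k : Type*} [Field k] {n : ℕ}

theorem regSet_nonneg {I : Ideal (MvPolynomial (Fin n) k)} (hI : I ≠ ⊤) (F : GradedFreeRes I)
    (r : ℤ) (hr : ∀ (i : ℕ) (j : Fin (F.b i)), F.D i j - (i : ℤ) ≤ r) : 0 ≤ r := by
  by_contra hneg
  have hv : ∀ j, F.v j = 0 := by
    intro j
    rcases F.hv j with h | ⟨m, hm, -⟩
    · exact h
    · have := hr 0 j
      push_cast at this
      omega
  obtain ⟨w, hw⟩ := F.haug 1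
  simp only [hv, mul_zero, Finset.sum_const_zero, map_zero] at hw
  apply hI
  rw [Ideal.eq_top_iff_one, ← Ideal.Quotient.eq_zero_iff_mem, map_one, hw]

/-- The empty resolution of the zero module. -/
noncomputable def topRes : GradedFreeRes (⊤ : Ideal (MvPolynomial (Fin n) k)) where
  len := 0
  b := fun _ => 0
  hb := fun _ _ => rfl
  D := fun _ j => j.elim0
  A := fun _ => 0
  v := fun j => j.elim0
  hv := fun j => j.elim0
  hA := fun _ j => j.elim0
  haug := fun y => ⟨0, Subsingleton.elim _ _⟩
  hex0 := fun w => ⟨fun _ => ⟨0, Subsingleton.elim _ _⟩, fun _ => Subsingleton.elim _ _⟩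
  hex := fun _ w => ⟨fun _ => ⟨0, Subsingleton.elim _ _⟩, fun _ => Subsingleton.elim _ _⟩

theorem regQuot_top : regQuot (⊤ : Ideal (MvPolynomial (Fin n) k)) = 0 := by
  refine Int.csInf_of_not_bddBelow ?_
  rintro ⟨r, hr⟩
  have := hr (show (r - 1) ∈ _ from ⟨topRes, fun _ j => j.elim0⟩)
  omega

theorem exists_frame_of_monomial {I : Ideal (MvPolynomial (Fin n) k)} (hI : IsMonomialIdeal I) :
    ∃ U : Set (Fin n →₀ ℕ), IsUpperSet U ∧ (∀ p, p ∈ I ↔ ∀ b ∈ p.support, b ∈ U) ∧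
      Nonempty (Frame k U) := by
  classical
  obtain ⟨T, rfl⟩ := hI
  obtain ⟨s, hs, hs'⟩ := (Submodule.fg_span_iff_fg_span_finset_subset _).1
    (IsNoetherian.noetherian (Ideal.span ((fun m => monomial m (1 : k)) '' T)))
  obtain ⟨G, -, rfl⟩ := Finset.subset_set_image_iff.1 hs
  refine ⟨{b | ∃ g ∈ G, g ≤ b}, ?_, ?_, Frame.exists_frame G⟩
  · rintro a b hab ⟨g, hg, h⟩
    exact ⟨g, hg, h.trans hab⟩
  · intro p
    have e : Ideal.span ((fun m => monomial m (1 : k)) '' T) =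
        Ideal.span ((fun m => monomial m (1 : k)) '' (G : Set (Fin n →₀ ℕ))) := by
      rw [← Finset.coe_image]
      exact hs'
    rw [e, mem_ideal_span_monomial_image]
    simp

theorem reg_le_toRes {I : Ideal (MvPolynomial (Fin n) k)} (P : Tot I) (r : ℤ)
    (h : ∀ t, P.D t - P.hd t ≤ r) :
    r ∈ {r : ℤ | ∃ F : GradedFreeRes I, ∀ (i : ℕ) (j : Fin (F.b i)), F.D i j - (i : ℤ) ≤ r} := by
  refine ⟨P.toRes, fun i j => ?_⟩
  have h1 := h (P.eqv i j).1
  have h2 : P.hd (P.eqv i j).1 = i := P.eqv_hd i j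
  have h3 : P.toRes.D i j = P.D (P.eqv i j).1 := rfl
  omega

end Final

/-- **Lemma.** For a monomial ideal `I` and a monomial `f`,
`reg R/I ≥ reg R/(I:f)`. -/
theorem reg_colon_monomial_le_reg {k : Type*} [Field k] {n : ℕ}
    (I : Ideal (MvPolynomial (Fin n) k)) (hI : IsMonomialIdeal I)
    (f : MvPolynomial (Fin n) k) (hf : ∃ m : Fin n →₀ ℕ, f = monomial m (1 : k)) :
    regQuot (I.colon (Ideal.span {f})) ≤ regQuot I := by
  classical
  by_cases htop : I = ⊤
  · subst htop
    have : (⊤ : Ideal (MvPolynomial (Fin n) k)).colon (Ideal.span {f}) = ⊤ := by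
      rw [Ideal.eq_top_iff_one, Ideal.mem_colon_span_singleton]
      trivial
    rw [this]
  obtain ⟨m, rfl⟩ := hf
  obtain ⟨U, hU, hIU, ⟨F₀⟩⟩ := exists_frame_of_monomial hI
  have h0 : (0 : Fin n →₀ ℕ) ∉ U := by
    intro h
    apply htop
    rw [Ideal.eq_top_iff_one, hIU]
    intro b hb
    have : b = 0 := by
      by_contra hne
      rw [mem_support_iff, coeff_one, if_neg (Ne.symm hne)] at hb
      exact hb rfl
    rwa [this]
  obtain ⟨F, hF⟩ := Frame.exists_minimal hU h0 F₀
  have hcolon : ∀ p, p ∈ I.colon (Ideal.span {monomial m (1 : k)}) ↔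
      ∀ b ∈ p.support, b ∈ {b | b + m ∈ U} := by
    intro p
    rw [Ideal.mem_colon_span_singleton, hIU]
    constructor
    · intro h b hb
      refine h (b + m) ?_
      rw [mem_support_iff, coeff_mul_monomial, mul_one]
      exact mem_support_iff.1 hb
    · intro h b hb
      rw [mem_support_iff, coeff_mul_monomial'] at hb
      by_cases hmb : m ≤ b
      · rw [if_pos hmb, mul_one] at hb
        have := h (b - m) (mem_support_iff.2 hb)
        rwa [Set.mem_ofPred_eq, tsub_add_cancel_of_le hmb] at this
      · rw [if_neg hmb] at hb
        exact absurd rfl hb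
  have hIz : ∀ (d : ℤ), ∀ p ∈ I, zcomp d p ∈ I := by
    intro d p hp
    rw [hIU] at hp ⊢
    intro b hb
    refine hp b ?_
    rw [mem_support_iff, coeff_zcomp] at hb
    rw [mem_support_iff]
    intro h
    simp [h] at hb
  have hmin : ∀ p q, constantCoeff ((F.toTot hIU).d p q) = 0 := by
    intro p q
    show constantCoeff (monomial (F.md q - F.md p) (F.l p q)) = 0
    rw [constantCoeff_eq, coeff_monomial]
    split_ifs with h
    · by_contra hl
      exact hl (hF p q (le_antisymm (F.l_md p q hl) (tsub_eq_zero_iff_le.1 h)))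
    · rfl
  have hsub : ∀ r : ℤ, (∃ Q : GradedFreeRes I, ∀ (i : ℕ) (j : Fin (Q.b i)), Q.D i j - (i : ℤ) ≤ r) →
      r ∈ {r : ℤ | ∃ Q : GradedFreeRes (I.colon (Ideal.span {monomial m (1 : k)})),
        ∀ (i : ℕ) (j : Fin (Q.b i)), Q.D i j - (i : ℤ) ≤ r} := by
    rintro r ⟨Q, hQ⟩
    refine reg_le_toRes ((F.colon hU m).toTot hcolon) r fun q => ?_
    obtain ⟨t, ht1, ht2⟩ := Tot.compare hIz (F.toTot hIU) Q.toTot hmin q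
    have h1 := hQ t.1 t.2
    change t.1 = F.hd q at ht1
    change Q.D t.1 t.2 = ((F.md q).degree : ℤ) at ht2
    change (((F.md q - m).degree : ℕ) : ℤ) - (F.hd q : ℤ) ≤ r
    have h2 : (F.md q - m).degree ≤ (F.md q).degree := Finsupp.degree_mono tsub_le_self
    rw [ht2, ht1] at h1
    omega
  have hne : {r : ℤ | ∃ Q : GradedFreeRes I,
      ∀ (i : ℕ) (j : Fin (Q.b i)), Q.D i j - (i : ℤ) ≤ r}.Nonempty := by
    obtain ⟨r, hr⟩ := (Set.finite_range fun t => (F.toTot hIU).D t - (F.toTot hIU).hd t).bddAbove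
    exact ⟨r, reg_le_toRes (F.toTot hIU) r fun t => hr ⟨t, rfl⟩⟩
  by_cases hc : I.colon (Ideal.span {monomial m (1 : k)}) = ⊤
  · rw [hc, regQuot_top]
    refine le_csInf hne ?_
    rintro r ⟨Q, hQ⟩
    exact regSet_nonneg htop Q r hQ
  · refine csInf_le_csInf ⟨0, ?_⟩ hne hsub
    rintro r ⟨Q, hQ⟩
    exact regSet_nonneg hc Q r hQ
end

section
/- Let R = k[x_1,…,x_n] be a polynomial ring over a field k, let I ⊆ R be a monomial ideal, and let f ∈ R be any monomial. Then depth R/I ∈ {depth R/(I:f), depth R/(I,f)}. -/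
open MvPolynomial

section DepthTheory

open CategoryTheory CategoryTheory.Abelian Pointwise

universe u

variable {R : Type u} [CommRing R]

/-- Vanishing of `Ext^i(R/J, M)` for all `i < d`. -/
def DepthGE (J : Ideal R) (d : ℕ) (M : Type u) [AddCommGroup M] [Module R M] : Prop :=
  ∀ i < d, Subsingleton (Ext (ModuleCat.of R (R ⧸ J)) (ModuleCat.of R M) i)

variable {J : Ideal R}

section ses

variable {A B C : Type u} [AddCommGroup A] [Module R A] [AddCommGroup B] [Module R B]
  [AddCommGroup C] [Module R C]

theorem DepthGE.mono {d e : ℕ} (h : d ≤ e) (hA : DepthGE J e A) : DepthGE J d A :=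
  fun i hi => hA i (hi.trans_le h)

theorem ses_shortExact (f : A →ₗ[R] B) (g : B →ₗ[R] C) (hf : Function.Injective f)
    (hfg : Function.Exact f g) (hg : Function.Surjective g) :
    (ModuleCat.shortComplexOfCompEqZero f g hfg.linearMap_comp_eq_zero).ShortExact where
  exact := ModuleCat.shortComplex_exact _ hfg
  mono_f := by simpa [ModuleCat.mono_iff_injective] using! hf
  epi_g := by simpa [ModuleCat.epi_iff_surjective] using! hg

theorem DepthGE.mid (f : A →ₗ[R] B) (g : B →ₗ[R] C) (hf : Function.Injective f)
    (hfg : Function.Exact f g) (hg : Function.Surjective g) {d : ℕ}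
    (hA : DepthGE J d A) (hC : DepthGE J d C) : DepthGE J d B := by
  intro i hi
  have hS := ses_shortExact f g hf hfg hg
  have := hA i hi
  have := hC i hi
  refine subsingleton_of_forall_eq 0 fun x => ?_
  obtain ⟨y, hy⟩ := Ext.covariant_sequence_exact₂ (ModuleCat.of R (R ⧸ J)) hS x
    (Subsingleton.elim (α := Ext (ModuleCat.of R (R ⧸ J)) (ModuleCat.of R C) i) _ _)
  rw [← hy, Subsingleton.elim (α := Ext (ModuleCat.of R (R ⧸ J)) (ModuleCat.of R A) i) y 0]
  simp

theorem DepthGE.right (f : A →ₗ[R] B) (g : B →ₗ[R] C) (hf : Function.Injective f)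
    (hfg : Function.Exact f g) (hg : Function.Surjective g) {d : ℕ}
    (hA : DepthGE J (d + 1) A) (hB : DepthGE J d B) : DepthGE J d C := by
  intro i hi
  have hS := ses_shortExact f g hf hfg hg
  have := hA (i + 1) (by omega)
  have := hB i hi
  refine subsingleton_of_forall_eq 0 fun x => ?_
  obtain ⟨y, hy⟩ := Ext.covariant_sequence_exact₃ (ModuleCat.of R (R ⧸ J)) hS x rfl
    (Subsingleton.elim (α := Ext (ModuleCat.of R (R ⧸ J)) (ModuleCat.of R A) (i + 1)) _ _)
  rw [← hy, Subsingleton.elim (α := Ext (ModuleCat.of R (R ⧸ J)) (ModuleCat.of R B) i) y 0]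
  simp

/-- If `depth B ≥ d` and `depth C ≥ d - 1` then `depth A ≥ d`. -/
theorem DepthGE.left (f : A →ₗ[R] B) (g : B →ₗ[R] C) (hf : Function.Injective f)
    (hfg : Function.Exact f g) (hg : Function.Surjective g) {d : ℕ}
    (hB : DepthGE J (d + 1) B) (hC : DepthGE J d C) : DepthGE J (d + 1) A := by
  intro i hi
  have hS := ses_shortExact f g hf hfg hg
  have hBi := hB i hi
  rcases i with _ | i
  · refine subsingleton_of_forall_eq 0 fun x => ?_
    have := hS.mono_f
    apply Ext.postcomp_mk₀_injective_of_mono (ModuleCat.of R (R ⧸ J))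
      (ModuleCat.shortComplexOfCompEqZero f g hfg.linearMap_comp_eq_zero).f
    exact Subsingleton.elim (α := Ext (ModuleCat.of R (R ⧸ J)) (ModuleCat.of R B) 0) _ _
  · have := hC i (by omega)
    refine subsingleton_of_forall_eq 0 fun x => ?_
    obtain ⟨y, hy⟩ := Ext.covariant_sequence_exact₁ (ModuleCat.of R (R ⧸ J)) hS x
      (Subsingleton.elim (α := Ext (ModuleCat.of R (R ⧸ J)) (ModuleCat.of R B) (i + 1)) _ _) rfl
    rw [← hy, Subsingleton.elim (α := Ext (ModuleCat.of R (R ⧸ J)) (ModuleCat.of R C) i) y 0]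
    simp

end ses

section reg

variable {M : Type u} [AddCommGroup M] [Module R M]

theorem DepthGE.quot {r : R} (hr : IsSMulRegular M r) {d : ℕ} (h : DepthGE J (d + 1) M) :
    DepthGE J d (QuotSMulTop r M) :=
  DepthGE.right (LinearMap.lsmul R M r) (r • (⊤ : Submodule R M)).mkQ hr
    (LinearMap.exact_lsmul_mkQ_smul_top M r) (Submodule.mkQ_surjective _) h (h.mono (by omega))

theorem DepthGE.of_quot {r : R} (hrJ : r ∈ J) (hr : IsSMulRegular M r) {d : ℕ}
    (h : DepthGE J d (QuotSMulTop r M)) : DepthGE J (d + 1) M := by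
  intro i hi
  have hann : r ∈ Module.annihilator R (R ⧸ J) := by
    rwa [Ideal.annihilator_quotient]
  rcases i with _ | i
  · have : Subsingleton ((R ⧸ J) →ₗ[R] M) :=
      IsSMulRegular.linearMap_subsingleton_of_mem_annihilator hr hann
    exact (Ext.addEquiv₀.trans ModuleCat.homAddEquiv).subsingleton
  · have := h i (by omega)
    have hS := IsSMulRegular.smulShortComplex_shortExact (M := ModuleCat.of R M) hr
    refine subsingleton_of_forall_eq 0 fun x => ?_
    have hz := Ext.postcomp_smul_id_eq_zero_of_mem_annihilator
      (M := ModuleCat.of R M) (N := ModuleCat.of R (R ⧸ J)) hann (i + 1)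
    have hx := congrArg (fun φ => φ.hom x) hz
    obtain ⟨y, hy⟩ := Ext.covariant_sequence_exact₁ (ModuleCat.of R (R ⧸ J)) hS x hx rfl
    have hy0 : y = 0 := Subsingleton.elim
      (α := Ext (ModuleCat.of R (R ⧸ J)) (ModuleCat.of R (QuotSMulTop r M)) i) _ _
    rw [hy0, Ext.zero_comp] at hy
    exact hy.symm

theorem DepthGE.exists_regular [IsNoetherianRing R] [Module.Finite R M] {d : ℕ}
    (h : DepthGE J (d + 1) M) : ∃ r ∈ J, IsSMulRegular M r := by
  have := h 0 (by omega)
  have : Subsingleton (ModuleCat.of R (R ⧸ J) ⟶ ModuleCat.of R M) :=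
    Ext.addEquiv₀.subsingleton_congr.mp this
  have : Subsingleton ((R ⧸ J) →ₗ[R] M) :=
    (ModuleCat.homAddEquiv (M := ModuleCat.of R (R ⧸ J)) (N := ModuleCat.of R M)).symm.subsingleton
  obtain ⟨r, hr, h'⟩ := IsSMulRegular.subsingleton_linearMap_iff.mp this
  exact ⟨r, by rwa [Ideal.annihilator_quotient] at hr, h'⟩

theorem depthGE_iff_regular [IsNoetherianRing R] [Module.Finite R M]
    (hlt : J • (⊤ : Submodule R M) ≠ ⊤) (d : ℕ) :
    (∃ rs : List R, rs.length = d ∧ (∀ r ∈ rs, r ∈ J) ∧ RingTheory.Sequence.IsRegular M rs) ↔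
      DepthGE J d M := by
  have supp : Module.support R (R ⧸ J) = PrimeSpectrum.zeroLocus J := by
    rw [Module.support_eq_zeroLocus, Ideal.annihilator_quotient]
  constructor
  · rintro ⟨rs, rfl, hrs, h⟩
    exact ModuleCat.subsingleton_ext_of_exists_isRegular J (ModuleCat.of R (R ⧸ J))
      supp.subset (ModuleCat.of R M) hlt.lt_top rs hrs h
  · intro h
    exact ModuleCat.exists_isRegular_of_exists_subsingleton_ext J d (ModuleCat.of R M)
      hlt.lt_top (ModuleCat.of R (R ⧸ J)) supp h

end reg

section graded

/-- An `x`-grading on `B` (concentrated in nonnegative degrees and generated by degree zero),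
whose components are stable under the subring `S`. -/
structure XGrading (S : Subring R) (x : R) (B : Type u) [AddCommGroup B] [Module R B] where
  p : ℕ → B →+ B
  smul : ∀ j, ∀ s ∈ S, ∀ b, p j (s • b) = s • p j b
  zero : ∀ b, p 0 (x • b) = 0
  succ : ∀ j b, p (j + 1) (x • b) = x • p j b
  sum : ∀ b, ∃ N, b = ∑ j ∈ Finset.range N, p j b
  gen : ∀ j b, ∃ c, p (j + 1) b = x • c

variable {S : Subring R} {x : R} {B : Type u} [AddCommGroup B] [Module R B]

/-- The induced grading on `B / rB`, for `r` of degree zero. -/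
def XGrading.quot (G : XGrading S x B) {r : R} (hr : r ∈ S) : XGrading S x (QuotSMulTop r B) where
  p j := QuotientAddGroup.map _ _ (G.p j) (by
    intro b hb
    obtain ⟨c, -, rfl⟩ := (Submodule.mem_smul_pointwise_iff_exists _ _ _).mp hb
    refine (Submodule.mem_smul_pointwise_iff_exists _ _ _).mpr ⟨G.p j c, trivial, ?_⟩
    exact (G.smul j r hr c).symm)
  smul := by
    intro j s hs b
    obtain ⟨b, rfl⟩ := Submodule.Quotient.mk_surjective _ b
    exact congrArg (Submodule.Quotient.mk (p := r • (⊤ : Submodule R B))) (G.smul j s hs b)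
  zero := by
    intro b
    obtain ⟨b, rfl⟩ := Submodule.Quotient.mk_surjective _ b
    exact congrArg (Submodule.Quotient.mk (p := r • (⊤ : Submodule R B))) (G.zero b)
  succ := by
    intro j b
    obtain ⟨b, rfl⟩ := Submodule.Quotient.mk_surjective _ b
    exact congrArg (Submodule.Quotient.mk (p := r • (⊤ : Submodule R B))) (G.succ j b)
  sum := by
    intro b
    obtain ⟨b, rfl⟩ := Submodule.Quotient.mk_surjective _ b
    obtain ⟨N, hN⟩ := G.sum b
    refine ⟨N, ?_⟩
    have := congrArg (Submodule.mkQ (r • (⊤ : Submodule R B))) hN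
    rw [map_sum] at this
    exact this
  gen := by
    intro j b
    obtain ⟨b, rfl⟩ := Submodule.Quotient.mk_surjective _ b
    obtain ⟨c, hc⟩ := G.gen j b
    exact ⟨Submodule.Quotient.mk c,
      congrArg (Submodule.Quotient.mk (p := r • (⊤ : Submodule R B))) hc⟩

variable {T : Set R}

theorem XGrading.torsionFree [IsNoetherianRing R] [Module.Finite R B] (G : XGrading S x B)
    (hJ : J = Ideal.span T ⊔ Ideal.span {x}) {d : ℕ} (hB : DepthGE J (d + 2) B)
    (u : B) (hu : ∀ t ∈ T, t • u = 0) : u = 0 := by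
  classical
  by_contra hu0
  have key : ∃ j, ∃ u : B, (∀ t ∈ T, t • u = 0) ∧ G.p j u ≠ 0 := by
    by_contra! hcon
    obtain ⟨N, hN⟩ := G.sum u
    exact hu0 (hN.trans (Finset.sum_eq_zero fun j _ => hcon j u hu))
  obtain ⟨u, hu, hpu⟩ := Nat.find_spec key
  have hmin : ∀ j < Nat.find key, ∀ u : B, (∀ t ∈ T, t • u = 0) → G.p j u = 0 := by
    intro j hj v hv
    by_contra hne
    exact Nat.find_min key hj ⟨v, hv, hne⟩
  have hnx : ∀ b : B, (∀ t ∈ T, t • b = 0) → u ≠ x • b := by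
    rintro b hb rfl
    rcases hj : Nat.find key with _ | j
    · rw [hj] at hpu
      exact hpu (G.zero b)
    · rw [hj, G.succ, hmin j (by omega) b hb, smul_zero] at hpu
      exact hpu rfl
  have hY : ∀ v : B, (∀ t ∈ T, t • v = 0) → ∀ y ∈ Ideal.span T, y • v = 0 := by
    intro v hv y hy
    have : Ideal.span T ≤ (Submodule.span R {v}).annihilator :=
      Ideal.span_le.mpr fun t ht => (Submodule.mem_annihilator_span_singleton _ _).mpr (hv t ht)
    exact (Submodule.mem_annihilator_span_singleton _ _).mp (this hy)
  obtain ⟨r, hrJ, hr⟩ := hB.exists_regular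
  obtain ⟨r', hr'J, hr'⟩ := (hB.quot hr).exists_regular
  have hr0 : ∀ b : B, r • b = 0 → b = 0 := fun b hb => hr (by simpa using hb)
  rw [hJ] at hrJ
  obtain ⟨y, hy, z, hz, rfl⟩ := Submodule.mem_sup.mp hrJ
  obtain ⟨s, rfl⟩ := Ideal.mem_span_singleton.mp hz
  have hact : ∀ v : B, (∀ t ∈ T, t • v = 0) → (y + x * s) • v = x • s • v := by
    intro v hv
    rw [add_smul, hY v hv y hy, zero_add, mul_smul]
  have hTs : ∀ v : B, (∀ t ∈ T, t • v = 0) → ∀ a : R, ∀ t ∈ T, t • a • v = 0 := by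
    intro v hv a t ht
    rw [smul_comm, hv t ht, smul_zero]
  -- `v = s • u` is a socle element of `B / rB`
  have h1 : (Submodule.Quotient.mk (s • u) : QuotSMulTop (y + x * s) B) = 0 := by
    have hkill : ∀ a ∈ J, a • (Submodule.Quotient.mk (s • u) : QuotSMulTop (y + x * s) B) = 0 := by
      intro a ha
      rw [hJ] at ha
      obtain ⟨y', hy', z', hz', rfl⟩ := Submodule.mem_sup.mp ha
      obtain ⟨s', rfl⟩ := Ideal.mem_span_singleton.mp hz'
      rw [← Submodule.Quotient.mk_smul, Submodule.Quotient.mk_eq_zero, add_smul,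
        hY _ (hTs u hu s) y' hy', zero_add, mul_comm x s', mul_smul, ← hact u hu, smul_comm]
      exact Submodule.smul_mem_pointwise_smul _ _ _ trivial
    have := hkill r' hr'J
    exact hr' (by simpa using this)
  rw [Submodule.Quotient.mk_eq_zero] at h1
  obtain ⟨b, -, hb⟩ := (Submodule.mem_smul_pointwise_iff_exists _ _ _).mp h1
  have hbT : ∀ t ∈ T, t • b = 0 := by
    intro t ht
    apply hr0
    rw [smul_comm, hb]
    exact hTs u hu s t ht
  refine hnx b hbT (sub_eq_zero.mp (hr0 _ ?_))
  rw [hact, smul_sub, smul_comm s x b, ← hact b hbT, hb, sub_self, smul_zero]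
  intro t ht
  rw [smul_sub, hu t ht, hTs b hbT x t ht, sub_zero]

theorem exists_regular_in_subring [IsNoetherianRing R] [Module.Finite R B] (hT : T ⊆ S)
    (hB : ∀ u : B, (∀ t ∈ T, t • u = 0) → u = 0) :
    ∃ r ∈ S, r ∈ Ideal.span T ∧ IsSMulRegular B r := by
  classical
  have hfin := associatedPrimes.finite R B
  let Y : Ideal S := Ideal.span ((↑) ⁻¹' T)
  have hnot : ¬ ((Y : Set S) ⊆ ⋃ P ∈ (hfin.toFinset : Set (Ideal R)), (P.comap S.subtype : Ideal S)) := by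
    intro hsub
    rw [Ideal.subset_union_prime ⊥ ⊥] at hsub
    · obtain ⟨P, hP, hle⟩ := hsub
      have hP' : IsAssociatedPrime P B := hfin.mem_toFinset.mp hP
      obtain ⟨hprime, u, rfl⟩ := (isAssociatedPrime_iff).mp hP'
      have hu : u = 0 := hB u fun t ht => by
        have := hle (Ideal.subset_span (show (⟨t, hT ht⟩ : S) ∈ ((↑) ⁻¹' T : Set S) from ht))
        simpa using this
      subst hu
      exact hprime.ne_top (by ext; simp)
    · intro P hP _ _
      have hP' : IsAssociatedPrime P B := hfin.mem_toFinset.mp hP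
      have := hP'.isPrime
      exact Ideal.comap_isPrime _ _
  obtain ⟨r, hrY, hr⟩ := Set.not_subset.mp hnot
  refine ⟨r, r.2, ?_, ?_⟩
  · have : Y ≤ (Ideal.span T).comap S.subtype :=
      Ideal.span_le.mpr fun t ht => Ideal.subset_span ht
    exact this hrY
  · intro a b hab
    by_contra hne
    apply hr
    have hmem : (r : R) ∈ ⋃ P ∈ associatedPrimes R B, (P : Set R) := by
      rw [biUnion_associatedPrimes_eq_zero_divisors]
      refine ⟨a - b, sub_ne_zero.mpr hne, ?_⟩
      rw [smul_sub]
      exact sub_eq_zero.mpr hab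
    simp only [Set.mem_iUnion] at hmem ⊢
    obtain ⟨P, hP, hrP⟩ := hmem
    exact ⟨P, by simpa using hP, hrP⟩

/-- Cutting an `x`-graded module by `x` drops the depth by at most one. -/
theorem XGrading.depth_quot [IsNoetherianRing R] (hT : T ⊆ S)
    (hJ : J = Ideal.span T ⊔ Ideal.span {x}) (d : ℕ) :
    ∀ (B C : Type u) [AddCommGroup B] [Module R B] [AddCommGroup C] [Module R C]
      [Module.Finite R B] (_ : XGrading S x B) (π : B →ₗ[R] C), Function.Surjective π →
      (∀ b, π b = 0 ↔ ∃ c, b = x • c) → DepthGE J (d + 1) B → DepthGE J d C := by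
  induction d with
  | zero => intro B C _ _ _ _ _ G π _ _ _ i hi; omega
  | succ d ih =>
    intro B C _ _ _ _ _ G π hπ hker hB
    obtain ⟨r, hrS, hrT, hr⟩ := exists_regular_in_subring (B := B) hT
      (G.torsionFree hJ hB)
    have hrJ : r ∈ J := hJ ▸ Ideal.mem_sup_left hrT
    have hp0 : ∀ b, G.p 0 b = 0 → ∃ c, b = x • c := by
      intro b hb
      obtain ⟨N, hN⟩ := G.sum b
      choose c hc using fun j => G.gen j b
      rcases N with _ | N
      · exact ⟨0, by simpa using hN⟩
      · refine ⟨∑ j ∈ Finset.range N, c j, ?_⟩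
        rw [Finset.sum_range_succ', hb, add_zero] at hN
        rw [Finset.smul_sum]
        exact hN.trans (Finset.sum_congr rfl fun j _ => hc j)
    have hrC0 : ∀ b, π (r • b) = 0 → π b = 0 := by
      intro b hb
      obtain ⟨c, hc⟩ := (hker _).mp hb
      refine (hker _).mpr (hp0 b ?_)
      have h1 : r • G.p 0 b = 0 := by rw [← G.smul 0 r hrS, hc, G.zero]
      exact hr (by simpa using h1)
    have hrC : IsSMulRegular C r := by
      intro a b hab
      obtain ⟨a, rfl⟩ := hπ a
      obtain ⟨b, rfl⟩ := hπ b
      have : π (r • (a - b)) = 0 := by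
        rw [map_smul, map_sub, smul_sub]
        exact sub_eq_zero.mpr hab
      have := hrC0 _ this
      rwa [map_sub, sub_eq_zero] at this
    refine DepthGE.of_quot hrJ hrC ?_
    refine ih (QuotSMulTop r B) (QuotSMulTop r C) (G.quot hrS) (QuotSMulTop.map r π) ?_ ?_
      (hB.quot hr)
    · intro c
      obtain ⟨c, rfl⟩ := Submodule.Quotient.mk_surjective _ c
      obtain ⟨b, rfl⟩ := hπ c
      exact ⟨Submodule.Quotient.mk b, rfl⟩
    · intro b
      obtain ⟨b, rfl⟩ := Submodule.Quotient.mk_surjective _ b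
      constructor
      · intro h
        have h : (Submodule.Quotient.mk (π b) : QuotSMulTop r C) = 0 := h
        rw [Submodule.Quotient.mk_eq_zero] at h
        obtain ⟨c, -, hc⟩ := (Submodule.mem_smul_pointwise_iff_exists _ _ _).mp h
        obtain ⟨c, rfl⟩ := hπ c
        have h0 : π (b - r • c) = 0 := by rw [map_sub, map_smul, hc, sub_self]
        obtain ⟨e, he⟩ := (hker _).mp h0
        refine ⟨Submodule.Quotient.mk e, ?_⟩
        rw [← Submodule.Quotient.mk_smul, ← he, Submodule.Quotient.eq, sub_sub_cancel]
        exact Submodule.smul_mem_pointwise_smul _ _ _ trivial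
      · rintro ⟨c, hc⟩
        obtain ⟨c, rfl⟩ := Submodule.Quotient.mk_surjective _ c
        rw [hc, map_smul]
        change x • (Submodule.Quotient.mk (π c) : QuotSMulTop r C) = 0
        rw [← Submodule.Quotient.mk_smul, ← map_smul, (hker _).mpr ⟨c, rfl⟩]
        rfl

end graded

end DepthTheory
section MonomialPart

universe v

variable {k : Type v} [Field k] {n : ℕ}

/-- The component of `g` of degree `j` with respect to the variable `X i`. -/
noncomputable def xComp (i : Fin n) (j : ℕ) :
    MvPolynomial (Fin n) k →ₗ[k] MvPolynomial (Fin n) k :=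
  weightedHomogeneousComponent (Pi.single i 1 : Fin n → ℕ) j

theorem xComp_mul (i : Fin n) (j e : ℕ) (s b : MvPolynomial (Fin n) k)
    (hs : IsWeightedHomogeneous (Pi.single i 1 : Fin n → ℕ) s e) :
    xComp i j (s * b) = if e ≤ j then s * xComp i (j - e) b else 0 := by
  let _ := MvPolynomial.weightedGradedAlgebra k (Pi.single i 1 : Fin n → ℕ)
  have h := DirectSum.coe_decompose_mul_of_left_mem
    (weightedHomogeneousSubmodule k (Pi.single i 1 : Fin n → ℕ)) (b := b) j
    ((mem_weightedHomogeneousSubmodule _ _ _ _).mpr hs)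
  have e1 : ∀ (φ : MvPolynomial (Fin n) k) m,
      ((DirectSum.decompose (weightedHomogeneousSubmodule k (Pi.single i 1 : Fin n → ℕ)) φ m :
        weightedHomogeneousSubmodule k (Pi.single i 1 : Fin n → ℕ) m) : MvPolynomial (Fin n) k)
        = xComp i m φ := fun φ m => weightedDecomposition.decompose'_apply k _ φ m
  rw [e1, e1] at h
  exact h

theorem isWeightedHomogeneous_single_X (i : Fin n) :
    IsWeightedHomogeneous (Pi.single i 1 : Fin n → ℕ) (X i : MvPolynomial (Fin n) k) 1 := by
  simpa using isWeightedHomogeneous_X k (Pi.single i 1 : Fin n → ℕ) i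

theorem weight_single (i : Fin n) (m : Fin n →₀ ℕ) :
    Finsupp.weight (Pi.single i 1 : Fin n → ℕ) m = m i := by
  simp [Finsupp.weight_apply, Finsupp.sum_fintype, Pi.single_apply]

theorem coeff_xComp (i : Fin n) (j : ℕ) (g : MvPolynomial (Fin n) k) (m : Fin n →₀ ℕ) :
    coeff m (xComp i j g) = if m i = j then coeff m g else 0 := by
  rw [xComp, coeff_weightedHomogeneousComponent, weight_single]

/-- The subring of polynomials not involving `X i`. -/
def degZero (k : Type v) [Field k] {n : ℕ} (i : Fin n) : Subring (MvPolynomial (Fin n) k) where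
  carrier := {s | IsWeightedHomogeneous (Pi.single i 1 : Fin n → ℕ) s 0}
  mul_mem' := fun ha hb => by simpa using IsWeightedHomogeneous.mul ha hb
  one_mem' := isWeightedHomogeneous_one k _
  add_mem' := fun ha hb => IsWeightedHomogeneous.add ha hb
  zero_mem' := isWeightedHomogeneous_zero k _ _
  neg_mem' := fun ha => IsWeightedHomogeneous.neg ha

/-- Closure of an ideal under passing to monomials in the support. -/
def MonClosed (I : Ideal (MvPolynomial (Fin n) k)) : Prop :=
  ∀ g ∈ I, ∀ m ∈ g.support, monomial m (1 : k) ∈ I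

theorem IsMonomialIdeal.monClosed {I : Ideal (MvPolynomial (Fin n) k)}
    (hI : IsMonomialIdeal I) : MonClosed I := by
  obtain ⟨T, rfl⟩ := hI
  intro g hg m hm
  rw [mem_ideal_span_monomial_image] at hg ⊢
  intro m' hm'
  have : m' = m := by simpa using Finset.mem_of_subset support_monomial_subset hm'
  exact this ▸ hg m hm

theorem mem_of_support {I : Ideal (MvPolynomial (Fin n) k)} (g : MvPolynomial (Fin n) k)
    (h : ∀ m ∈ g.support, monomial m (1 : k) ∈ I) : g ∈ I := by
  rw [g.as_sum]
  refine Ideal.sum_mem _ fun m hm => ?_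
  have : monomial m (coeff m g) = C (coeff m g) * monomial m (1 : k) := by
    rw [C_mul_monomial, mul_one]
  rw [this]
  exact I.mul_mem_left _ (h m hm)

theorem MonClosed.xComp_mem {I : Ideal (MvPolynomial (Fin n) k)} (hI : MonClosed I)
    (i : Fin n) (j : ℕ) (g : MvPolynomial (Fin n) k) (hg : g ∈ I) : xComp i j g ∈ I := by
  refine mem_of_support _ fun m hm => hI g hg m ?_
  rw [mem_support_iff, coeff_xComp] at hm
  rw [mem_support_iff]
  intro h
  simp [h] at hm

theorem MonClosed.colon_X {I : Ideal (MvPolynomial (Fin n) k)} (hI : MonClosed I)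
    (i : Fin n) : MonClosed (I.colon {(X i : MvPolynomial (Fin n) k)}) := by
  intro g hg m hm
  rw [Submodule.mem_colon_singleton, smul_eq_mul] at hg ⊢
  have : monomial m (1 : k) * X i = monomial (m + Finsupp.single i 1) 1 := by
    rw [X, monomial_mul, mul_one]
  rw [this]
  refine hI _ hg _ ?_
  rw [mem_support_iff, coeff_mul_X]
  exact mem_support_iff.mp hm

/-- The grading of `R/I` with respect to the variable `X i`. -/
noncomputable def quotGrading {I : Ideal (MvPolynomial (Fin n) k)} (hI : MonClosed I) (i : Fin n) :
    XGrading (degZero k i) (X i) (MvPolynomial (Fin n) k ⧸ I) where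
  p j := QuotientAddGroup.map _ _ (xComp i j).toAddMonoidHom (fun g hg => hI.xComp_mem i j g hg)
  smul := by
    intro j s hs b
    obtain ⟨b, rfl⟩ := Ideal.Quotient.mk_surjective b
    have := xComp_mul i j 0 s b hs
    rw [if_pos (Nat.zero_le _), Nat.sub_zero] at this
    exact congrArg (Ideal.Quotient.mk I) this
  zero := by
    intro b
    obtain ⟨b, rfl⟩ := Ideal.Quotient.mk_surjective b
    have := xComp_mul i 0 1 _ b (isWeightedHomogeneous_single_X i)
    exact congrArg (Ideal.Quotient.mk I) this
  succ := by
    intro j b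
    obtain ⟨b, rfl⟩ := Ideal.Quotient.mk_surjective b
    have := xComp_mul i (j + 1) 1 _ b (isWeightedHomogeneous_single_X i)
    rw [if_pos (by omega), Nat.add_sub_cancel] at this
    exact congrArg (Ideal.Quotient.mk I) this
  sum := by
    intro b
    obtain ⟨b, rfl⟩ := Ideal.Quotient.mk_surjective b
    refine ⟨b.support.sup (fun m => m i) + 1, ?_⟩
    have : b = ∑ j ∈ Finset.range (b.support.sup (fun m => m i) + 1), xComp i j b := by
      ext m
      simp only [coeff_sum, coeff_xComp, Finset.sum_ite_eq, Finset.mem_range]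
      split_ifs with h
      · rfl
      · by_contra hne
        have := Finset.le_sup (f := fun m : Fin n →₀ ℕ => m i) (mem_support_iff.mpr hne)
        omega
    have := congrArg (Ideal.Quotient.mk I) this
    rw [map_sum] at this
    exact this
  gen := by
    intro j b
    obtain ⟨b, rfl⟩ := Ideal.Quotient.mk_surjective b
    have : xComp i (j + 1) b ∈ Ideal.span (X '' {i}) := by
      rw [mem_ideal_span_X_image]
      intro m hm
      refine ⟨i, rfl, ?_⟩
      rw [mem_support_iff, coeff_xComp] at hm
      intro h
      simp [h] at hm
    rw [Set.image_singleton, Ideal.mem_span_singleton] at this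
    obtain ⟨c, hc⟩ := this
    exact ⟨Ideal.Quotient.mk I c, congrArg (Ideal.Quotient.mk I) hc⟩

/-- The map `R/(I:f) → R/I` given by multiplication by `f`. -/
noncomputable def colonMap {R : Type*} [CommRing R] (I : Ideal R) (f : R) :
    (R ⧸ I.colon {f}) →ₗ[R] (R ⧸ I) :=
  Submodule.mapQ (I.colon {f}) I (LinearMap.mulRight R f) (fun g hg => by
    simpa using Submodule.mem_colon_singleton.mp hg)

theorem colonMap_injective {R : Type*} [CommRing R] (I : Ideal R) (f : R) :
    Function.Injective (colonMap I f) := by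
  rw [injective_iff_map_eq_zero]
  intro a ha
  obtain ⟨a, rfl⟩ := Ideal.Quotient.mk_surjective a
  have ha : Ideal.Quotient.mk I (a * f) = 0 := ha
  rw [Ideal.Quotient.eq_zero_iff_mem] at ha ⊢
  exact Submodule.mem_colon_singleton.mpr ha

/-- The projection `R/I → R/(I,f)`. -/
noncomputable def sumMap {R : Type*} [CommRing R] (I : Ideal R) (f : R) :
    (R ⧸ I) →ₗ[R] (R ⧸ (I + Ideal.span {f})) :=
  Submodule.factor (p := I) (p' := I + Ideal.span {f}) le_sup_left

theorem sumMap_surjective {R : Type*} [CommRing R] (I : Ideal R) (f : R) :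
    Function.Surjective (sumMap I f) := by
  intro b
  obtain ⟨b, rfl⟩ := Ideal.Quotient.mk_surjective b
  exact ⟨Ideal.Quotient.mk I b, rfl⟩

theorem sumMap_eq_zero {R : Type*} [CommRing R] (I : Ideal R) (f : R) (b : R ⧸ I) :
    sumMap I f b = 0 ↔ ∃ c, b = f • c := by
  obtain ⟨b, rfl⟩ := Ideal.Quotient.mk_surjective b
  have h1 : sumMap I f (Ideal.Quotient.mk I b) = Ideal.Quotient.mk (I + Ideal.span {f}) b := rfl
  rw [h1, Ideal.Quotient.eq_zero_iff_mem]
  constructor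
  · intro h
    obtain ⟨a, ha, c, hc, rfl⟩ := Submodule.mem_sup.mp h
    obtain ⟨c, rfl⟩ := Ideal.mem_span_singleton.mp hc
    refine ⟨Ideal.Quotient.mk I c, ?_⟩
    rw [map_add, Ideal.Quotient.eq_zero_iff_mem.mpr ha, zero_add]
    rfl
  · rintro ⟨c, hc⟩
    obtain ⟨c, rfl⟩ := Ideal.Quotient.mk_surjective c
    have hc : Ideal.Quotient.mk I b = Ideal.Quotient.mk I (f * c) := hc
    rw [Ideal.Quotient.eq] at hc
    have := Submodule.add_mem_sup hc (Ideal.mem_span_singleton.mpr (dvd_mul_right f c))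
    rwa [sub_add_cancel] at this

theorem colonMap_sumMap_exact {R : Type*} [CommRing R] (I : Ideal R) (f : R) :
    Function.Exact (colonMap I f) (sumMap I f) := by
  intro b
  rw [sumMap_eq_zero]
  constructor
  · rintro ⟨c, rfl⟩
    obtain ⟨c, rfl⟩ := Ideal.Quotient.mk_surjective c
    exact ⟨Ideal.Quotient.mk _ c, congrArg (Ideal.Quotient.mk I) (mul_comm c f)⟩
  · rintro ⟨c, rfl⟩
    obtain ⟨c, rfl⟩ := Ideal.Quotient.mk_surjective c
    exact ⟨Ideal.Quotient.mk _ c, congrArg (Ideal.Quotient.mk I) (mul_comm c f)⟩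

theorem mxIdeal_eq (i : Fin n) :
    mxIdeal k n = Ideal.span (X '' {j | j ≠ i}) ⊔ Ideal.span {X i} := by
  rw [mxIdeal, ← Ideal.span_union]
  congr 1
  ext g
  simp only [Set.mem_range, Set.mem_union, Set.mem_image, Set.mem_singleton_iff]
  constructor
  · rintro ⟨j, rfl⟩
    by_cases h : j = i
    · right; rw [h]
    · left; exact ⟨j, h, rfl⟩
  · rintro (⟨j, -, rfl⟩ | rfl)
    · exact ⟨j, rfl⟩
    · exact ⟨i, rfl⟩

theorem depth_colon_X {I : Ideal (MvPolynomial (Fin n) k)} (hI : MonClosed I) (i : Fin n) (d : ℕ)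
    (h : DepthGE (mxIdeal k n) d (MvPolynomial (Fin n) k ⧸ I)) :
    DepthGE (mxIdeal k n) d
      (MvPolynomial (Fin n) k ⧸ I.colon {(X i : MvPolynomial (Fin n) k)}) := by
  rcases d with _ | d
  · intro i hi; omega
  refine DepthGE.left (colonMap I (X i)) (sumMap I (X i)) (colonMap_injective _ _)
    (colonMap_sumMap_exact _ _) (sumMap_surjective _ _) h ?_
  refine XGrading.depth_quot (S := degZero k i) (x := X i) (T := X '' {j | j ≠ i}) ?_
    (mxIdeal_eq i) d _ _ (quotGrading hI i) (sumMap I (X i)) (sumMap_surjective _ _)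
    (sumMap_eq_zero _ _) h
  rintro _ ⟨j, hj, rfl⟩
  have := isWeightedHomogeneous_X k (Pi.single i 1 : Fin n → ℕ) j
  rwa [Pi.single_eq_of_ne hj] at this

theorem colon_mul {R : Type*} [CommRing R] (I : Ideal R) (f g : R) :
    I.colon {g * f} = (I.colon {f}).colon {g} := by
  ext a
  simp [mul_assoc]

theorem depth_colon_monomial (N : ℕ) :
    ∀ (m : Fin n →₀ ℕ) (_ : m.degree = N)
    {I : Ideal (MvPolynomial (Fin n) k)} (_ : MonClosed I) (d : ℕ)
    (_ : DepthGE (mxIdeal k n) d (MvPolynomial (Fin n) k ⧸ I)),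
    DepthGE (mxIdeal k n) d
      (MvPolynomial (Fin n) k ⧸ I.colon {monomial m (1 : k)}) := by
  induction N with
  | zero =>
    intro m hm I hI d h
    have hm0 : m = 0 := (Finsupp.degree_eq_zero_iff m).mp hm
    have : I.colon {monomial m (1 : k)} = I := by
      ext a
      simp [hm0]
    rwa [this]
  | succ N ih =>
    intro m hm I hI d h
    have hm0 : m ≠ 0 := by
      rintro rfl
      simp at hm
    obtain ⟨i, hi⟩ := Finsupp.ne_iff.mp hm0
    have hmi : m - Finsupp.single i 1 + Finsupp.single i 1 = m :=
      Finsupp.sub_add_single_one_cancel hi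
    have hdeg : (m - Finsupp.single i 1).degree = N := by
      have := congrArg Finsupp.degree hmi
      rw [map_add, Finsupp.degree_single, hm] at this
      omega
    have hf : monomial m (1 : k) = monomial (m - Finsupp.single i 1) 1 * X i := by
      rw [X, monomial_mul, mul_one, hmi]
    rw [hf, colon_mul]
    exact ih _ hdeg (hI.colon_X i) d (depth_colon_X hI i d h)

theorem mem_mxIdeal_iff (g : MvPolynomial (Fin n) k) : g ∈ mxIdeal k n ↔ coeff 0 g = 0 := by
  rw [mxIdeal, ← Set.image_univ, mem_ideal_span_X_image]
  constructor
  · intro h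
    by_contra hne
    obtain ⟨i, -, hi⟩ := h 0 (mem_support_iff.mpr hne)
    exact hi rfl
  · intro h m hm
    have hm0 : m ≠ 0 := by
      rintro rfl
      exact mem_support_iff.mp hm h
    obtain ⟨i, hi⟩ := Finsupp.ne_iff.mp hm0
    exact ⟨i, trivial, hi⟩

theorem pdepth_eq {I : Ideal (MvPolynomial (Fin n) k)} (hI : I ≤ mxIdeal k n) :
    pdepth I = sSup {d | DepthGE (mxIdeal k n) d (MvPolynomial (Fin n) k ⧸ I)} := by
  rw [pdepth, idealDepth]
  congr 1
  ext d
  refine depthGE_iff_regular ?_ d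
  intro htop
  have hzero : ∀ b ∈ (mxIdeal k n) • (⊤ : Submodule (MvPolynomial (Fin n) k)
      (MvPolynomial (Fin n) k ⧸ I)), Submodule.factor hI b = 0 := by
    intro b hb
    induction hb using Submodule.smul_induction_on' with
    | smul r hr b _ =>
      obtain ⟨b, rfl⟩ := Ideal.Quotient.mk_surjective b
      have : Ideal.Quotient.mk (mxIdeal k n) (r * b) = 0 :=
        Ideal.Quotient.eq_zero_iff_mem.mpr (Ideal.mul_mem_right _ _ hr)
      exact this
    | add x _ y _ hx hy => rw [map_add, hx, hy, add_zero]
  have h1 : Ideal.Quotient.mk (mxIdeal k n) 1 = 0 :=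
    hzero (Ideal.Quotient.mk I 1) (by rw [htop]; trivial)
  rw [Ideal.Quotient.eq_zero_iff_mem, mem_mxIdeal_iff] at h1
  simp at h1

theorem MonClosed.colon_le {I : Ideal (MvPolynomial (Fin n) k)} (hI : MonClosed I)
    (m : Fin n →₀ ℕ) (hm : monomial m (1 : k) ∉ I) :
    I.colon {monomial m (1 : k)} ≤ mxIdeal k n := by
  intro g hg
  rw [Submodule.mem_colon_singleton, smul_eq_mul] at hg
  rw [mem_mxIdeal_iff]
  by_contra hne
  refine hm (hI _ hg m ?_)
  rw [mem_support_iff]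
  have := coeff_mul_monomial 0 m (1 : k) g
  rw [zero_add, mul_one] at this
  rwa [this]

end MonomialPart

/-- **Theorem.** For a monomial ideal `I` and a monomial `f`,
`depth R/I ∈ {depth R/(I:f), depth R/(I,f)}`. -/
theorem depth_mem_colon_or_sum_monomial {k : Type*} [Field k] {n : ℕ}
    (I : Ideal (MvPolynomial (Fin n) k)) (hI : IsMonomialIdeal I)
    (f : MvPolynomial (Fin n) k) (hf : ∃ m : Fin n →₀ ℕ, f = monomial m (1 : k)) :
    pdepth I = pdepth (I.colon (Ideal.span {f})) ∨
      pdepth I = pdepth (I + Ideal.span {f}) := by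
  obtain ⟨m, rfl⟩ := hf
  have hM := hI.monClosed
  have hcolon : I.colon (Ideal.span {monomial m (1 : k)} : Ideal (MvPolynomial (Fin n) k)) =
      I.colon {monomial m (1 : k)} := by
    ext a
    simp
  rw [hcolon]
  by_cases hmI : monomial m (1 : k) ∈ I
  · right
    congr 1
    exact (sup_eq_left.mpr ((Ideal.span_singleton_le_iff_mem I).mpr hmI)).symm
  by_cases hm0 : m = 0
  · left
    congr 1
    ext a
    simp [hm0]
  have hA := hM.colon_le m hmI
  have hB : I ≤ mxIdeal k n := fun g hg =>
    hA (Submodule.mem_colon_singleton.mpr (by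
      rw [smul_eq_mul]; exact I.mul_mem_right _ hg))
  have hC : I + Ideal.span {monomial m (1 : k)} ≤ mxIdeal k n := by
    refine sup_le hB ((Ideal.span_singleton_le_iff_mem _).mpr ?_)
    rw [mem_mxIdeal_iff, coeff_monomial, if_neg hm0]
  rw [pdepth_eq hA, pdepth_eq hB, pdepth_eq hC]
  have hle := depth_colon_monomial (k := k) m.degree m rfl hM
  have hinj := colonMap_injective I (monomial m (1 : k))
  have hex := colonMap_sumMap_exact I (monomial m (1 : k))
  have hsur := sumMap_surjective I (monomial m (1 : k))
  by_cases hall : ∀ d, DepthGE (mxIdeal k n) d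
      (MvPolynomial (Fin n) k ⧸ I.colon {monomial m (1 : k)}) →
      DepthGE (mxIdeal k n) d (MvPolynomial (Fin n) k ⧸ I)
  · left
    congr 1
    ext d
    exact ⟨hle d, hall d⟩
  · right
    push Not at hall
    obtain ⟨d, hdA, hdB⟩ := hall
    congr 1
    ext i
    constructor
    · intro hi
      have hi : DepthGE (mxIdeal k n) i (MvPolynomial (Fin n) k ⧸ I) := hi
      have hid : i < d := by
        by_contra hcon
        exact hdB (hi.mono (by omega))
      exact DepthGE.right _ _ hinj hex hsur (hdA.mono hid) hi
    · intro hi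
      have hi : DepthGE (mxIdeal k n) i
        (MvPolynomial (Fin n) k ⧸ (I + Ideal.span {monomial m (1 : k)})) := hi
      have hid : i < d := by
        by_contra hcon
        exact hdB (DepthGE.mid _ _ hinj hex hsur hdA (hi.mono (by omega)))
      exact DepthGE.mid _ _ hinj hex hsur (hdA.mono hid.le) hi
end
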